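/- arXiv:1604.07575 — 10 statements merged into one kernel-verified Lean document; each statement's English description precedes it below -/
import Mathlib

section
/- Let x : ℕ → ℝ be a sequence with x_n → 0. Then the following are equivalent: (1) the series of positive terms diverges to +∞ and the series of negative terms diverges to −∞ (i.e., ∑_{n : x_n > 0} x_n = +∞ and ∑_{n : x_n < 0} x_n = −∞); (2) the achievement set A(x) equals all of ℝ. -/
open Filter Topology

/-- The achievement set of a sequence: all limits of partial sums of subseries. -/
def achv {X : Type*} [AddCommMonoid X] [TopologicalSpace X] (x : ℕ → X) : Set X :=
  {s | ∃ ε : ℕ → Bool,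
    Tendsto (fun N => ∑ n ∈ Finset.range N, if ε n then x n else 0) atTop (𝓝 s)}

/-!
If `x → 0` and both the positive and the negative terms have infinite total mass, a given `s` is
reached greedily: take the positive terms while the partial sum is below `s`, and the negative ones
otherwise. The two divergences force the partial sums to return to both sides of `s` again and
again. A step towards `s` overshoots it by at most `|x n|`, so every downward crossing lands
close to `s`, and no later step can leave a small neighbourhood of `s`.

Conversely, every subseries sum is bounded above by any bound on the partial sums of the positive
terms, so an achievement set that is unbounded above makes these diverge. The negative terms follow
by passing to `-x`.
-/

theorem mem_achv_of_tendsto {M : Type*} [AddCommMonoid M] [TopologicalSpace M] {x S : ℕ → M}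
    {s : M} (h_zero : S 0 = 0) (h_succ : ∀ n, S (n + 1) = S n ∨ S (n + 1) = S n + x n)
    (h_lim : Tendsto S atTop (𝓝 s)) : s ∈ achv x := by
  classical
  refine ⟨fun n => decide (S (n + 1) = S n + x n), h_lim.congr fun N => ?_⟩
  refine (Finset.sum_range_induction _ S h_zero N fun n _ => ?_).symm
  grind

open scoped Pointwise in
theorem achv_neg {X : Type*} [AddCommGroup X] [TopologicalSpace X] [ContinuousNeg X] (x : ℕ → X) :
    achv (-x) = -achv x := by
  ext s
  refine exists_congr fun ε => ?_
  rw [← tendsto_neg_iff]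
  simp only [← Finset.sum_neg_distrib, Pi.neg_apply, neg_ite, neg_neg, neg_zero]

theorem tendsto_atTop_of_eventually_succ_eq_add {G : Type*} [AddCommGroup G] [PartialOrder G]
    [IsOrderedAddMonoid G] {S u : ℕ → G} (h_succ : ∀ᶠ n in atTop, S (n + 1) = S n + u n)
    (hu : Tendsto (fun N => ∑ n ∈ Finset.range N, u n) atTop atTop) : Tendsto S atTop atTop := by
  obtain ⟨N, hN⟩ := eventually_atTop.mp h_succ
  have h_eq : ∀ m ≥ N, (S N - ∑ n ∈ Finset.range N, u n) + ∑ n ∈ Finset.range m, u n = S m := by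
    intro m hm
    induction m, hm using Nat.le_induction with
    | base => exact sub_add_cancel _ _
    | succ m hm ih => rw [Finset.sum_range_succ, ← add_assoc, ih, hN m hm]
  exact (tendsto_atTop_add_const_left _ _ hu).congr' (eventually_atTop.mpr ⟨N, h_eq⟩)

section LinearOrder

variable {G : Type*} [AddCommGroup G] [LinearOrder G]

/-- The partial sums of the greedy subseries of `x` with target `s`: a positive term is taken when
the current sum is below `s`, a negative one otherwise. -/
def greedySum (x : ℕ → G) (s : G) : ℕ → G
  | 0 => 0
  | n + 1 => if greedySum x s n < s then greedySum x s n + (x n)⁺ else greedySum x s n - (x n)⁻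

section GreedySum

variable {x : ℕ → G} {s : G} {n : ℕ}

theorem greedySum_succ_of_lt (h : greedySum x s n < s) :
    greedySum x s (n + 1) = greedySum x s n + (x n)⁺ :=
  if_pos h

theorem greedySum_succ_of_le (h : s ≤ greedySum x s n) :
    greedySum x s (n + 1) = greedySum x s n - (x n)⁻ :=
  if_neg h.not_gt

variable [IsOrderedAddMonoid G]

theorem greedySum_succ_eq_or (x : ℕ → G) (s : G) (n : ℕ) :
    greedySum x s (n + 1) = greedySum x s n ∨
      greedySum x s (n + 1) = greedySum x s n + x n := by
  rw [greedySum, posPart_eq_ite, negPart_eq_ite]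
  grind

theorem abs_greedySum_succ_sub_lt {e : G} (hx : |x n| < e) (hS : |greedySum x s n - s| < e) :
    |greedySum x s (n + 1) - s| < e := by
  rw [greedySum, posPart_eq_ite, negPart_eq_ite]
  grind

theorem abs_greedySum_succ_sub_le_of_lt_of_succ_le (h : s < greedySum x s n)
    (h_succ : greedySum x s (n + 1) ≤ s) : |greedySum x s (n + 1) - s| ≤ |x n| := by
  rw [greedySum_succ_of_le h.le, negPart_eq_ite] at h_succ ⊢
  grind

theorem frequently_le_greedySum (s : G)
    (h_pos : Tendsto (fun N => ∑ n ∈ Finset.range N, (x n)⁺) atTop atTop) :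
    ∃ᶠ n in atTop, s ≤ greedySum x s n := by
  intro h_lt
  simp only [not_le] at h_lt
  have h_top : Tendsto (greedySum x s) atTop atTop :=
    tendsto_atTop_of_eventually_succ_eq_add (h_lt.mono fun _ => greedySum_succ_of_lt) h_pos
  obtain ⟨n, hn, hn'⟩ := (h_lt.and (h_top.eventually_ge_atTop s)).exists
  exact hn.not_ge hn'

theorem frequently_greedySum_le (s : G)
    (h_neg : Tendsto (fun N => ∑ n ∈ Finset.range N, (x n)⁻) atTop atTop) :
    ∃ᶠ n in atTop, greedySum x s n ≤ s := by
  intro h_gt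
  simp only [not_le] at h_gt
  have h_top : Tendsto (fun n => -greedySum x s n) atTop atTop := by
    refine tendsto_atTop_of_eventually_succ_eq_add (h_gt.mono fun n hn => ?_) h_neg
    rw [greedySum_succ_of_le hn.le, neg_sub', sub_neg_eq_add]
  obtain ⟨n, hn, hn'⟩ := (h_gt.and (h_top.eventually_ge_atTop (-s))).exists
  exact hn.not_ge (neg_le_neg_iff.mp hn')

theorem frequently_abs_greedySum_sub_lt {e : G} (hx : ∀ᶠ n in atTop, |x n| < e)
    (h_ge : ∃ᶠ n in atTop, s ≤ greedySum x s n) (h_le : ∃ᶠ n in atTop, greedySum x s n ≤ s) :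
    ∃ᶠ n in atTop, |greedySum x s n - s| < e := by
  intro h_far
  obtain ⟨N, hN⟩ := eventually_atTop.mp (hx.and h_far)
  obtain ⟨m, hm, h_start⟩ := frequently_atTop.mp h_ge N
  have h_ne : ∀ k ≥ N, greedySum x s k ≠ s := by
    intro k hk h_eq
    exact (hN k hk).2 (by simpa [h_eq] using (abs_nonneg _).trans_lt (hN k hk).1)
  have h_above : ∀ k ≥ m, s < greedySum x s k := by
    intro k hk
    induction k, hk using Nat.le_induction with
    | base => exact h_start.lt_of_ne' (h_ne m hm)
    | succ k hk ih =>
      by_contra! h_cross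
      exact (hN (k + 1) (by lia)).2
        ((abs_greedySum_succ_sub_le_of_lt_of_succ_le ih h_cross).trans_lt (hN k (by lia)).1)
  obtain ⟨k, hk, h_below⟩ := frequently_atTop.mp h_le m
  exact (h_above k hk).not_ge h_below

variable [TopologicalSpace G] [OrderTopology G]

theorem tendsto_greedySum (hx : Tendsto x atTop (𝓝 0)) (s : G)
    (h_pos : Tendsto (fun N => ∑ n ∈ Finset.range N, (x n)⁺) atTop atTop)
    (h_neg : Tendsto (fun N => ∑ n ∈ Finset.range N, (x n)⁻) atTop atTop) :
    Tendsto (greedySum x s) atTop (𝓝 s) := by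
  simp only [LinearOrderedAddCommGroup.tendsto_nhds, sub_zero] at hx ⊢
  intro e he
  obtain ⟨N, hN⟩ := eventually_atTop.mp (hx e he)
  obtain ⟨m, hm, h_close⟩ := frequently_atTop.mp (frequently_abs_greedySum_sub_lt (hx e he)
    (frequently_le_greedySum s h_pos) (frequently_greedySum_le s h_neg)) N
  refine eventually_atTop.mpr ⟨m, fun k hk => ?_⟩
  induction k, hk using Nat.le_induction with
  | base => exact h_close
  | succ k hk ih => exact abs_greedySum_succ_sub_lt (hN k (hm.trans hk)) ih

theorem achv_eq_univ_of_tendsto (hx : Tendsto x atTop (𝓝 0))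
    (h_pos : Tendsto (fun N => ∑ n ∈ Finset.range N, (x n)⁺) atTop atTop)
    (h_neg : Tendsto (fun N => ∑ n ∈ Finset.range N, (x n)⁻) atTop atTop) :
    achv x = Set.univ :=
  Set.eq_univ_of_forall fun s =>
    mem_achv_of_tendsto rfl (fun n => greedySum_succ_eq_or x s n)
      (tendsto_greedySum hx s h_pos h_neg)

end GreedySum

section Unbounded

variable [IsOrderedAddMonoid G] [TopologicalSpace G] [OrderClosedTopology G] {x : ℕ → G}

theorem tendsto_sum_posPart_of_not_bddAbove_achv (h : ¬BddAbove (achv x)) :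
    Tendsto (fun N => ∑ n ∈ Finset.range N, (x n)⁺) atTop atTop := by
  refine tendsto_atTop_atTop_of_monotone' ?_ fun ⟨b, hb⟩ => h ⟨b, ?_⟩
  · refine monotone_nat_of_le_succ fun n => ?_
    simp only [Finset.sum_range_succ, le_add_iff_nonneg_right, posPart_nonneg]
  · rintro s ⟨ε, hε⟩
    refine le_of_tendsto' hε fun N => le_trans ?_ (hb ⟨N, rfl⟩)
    refine Finset.sum_le_sum fun n _ => ?_
    split_ifs
    exacts [le_posPart _, posPart_nonneg _]

theorem tendsto_sum_negPart_of_not_bddBelow_achv [ContinuousNeg G] (h : ¬BddBelow (achv x)) :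
    Tendsto (fun N => ∑ n ∈ Finset.range N, (x n)⁻) atTop atTop := by
  rw [← bddAbove_neg, ← achv_neg] at h
  simpa only [Pi.neg_apply, posPart_neg] using tendsto_sum_posPart_of_not_bddAbove_achv h

end Unbounded

theorem tendsto_sum_ite_neg_atBot_iff [IsOrderedAddMonoid G] (x : ℕ → G) :
    Tendsto (fun N => ∑ n ∈ Finset.range N, if x n < 0 then x n else 0) atTop atBot ↔
      Tendsto (fun N => ∑ n ∈ Finset.range N, (x n)⁻) atTop atTop := by
  simp only [← tendsto_neg_atTop_iff, ← Finset.sum_neg_distrib, neg_ite, neg_zero,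
    negPart_eq_ite_lt]

theorem stmt_1_general [IsOrderedAddMonoid G] [Nontrivial G] [TopologicalSpace G]
    [OrderTopology G] (x : ℕ → G) (hx : Tendsto x atTop (𝓝 0)) :
    (Tendsto (fun N => ∑ n ∈ Finset.range N, if 0 < x n then x n else 0) atTop atTop ∧
      Tendsto (fun N => ∑ n ∈ Finset.range N, if x n < 0 then x n else 0) atTop atBot)
    ↔ achv x = Set.univ := by
  simp only [tendsto_sum_ite_neg_atBot_iff, ← posPart_eq_ite_lt]
  refine ⟨fun ⟨h_pos, h_neg⟩ => achv_eq_univ_of_tendsto hx h_pos h_neg, fun h => ⟨?_, ?_⟩⟩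
  · exact tendsto_sum_posPart_of_not_bddAbove_achv (h ▸ not_bddAbove_univ)
  · exact tendsto_sum_negPart_of_not_bddBelow_achv (h ▸ not_bddBelow_univ)

end LinearOrder

/-- For `x : ℕ → ℝ` with `x_n → 0`: the series of positive terms diverges to `+∞`
and the series of negative terms diverges to `−∞` if and only if `A(x) = ℝ`. -/
theorem stmt_1 (x : ℕ → ℝ) (hx : Tendsto x atTop (𝓝 0)) :
    (Tendsto (fun N => ∑ n ∈ Finset.range N, if 0 < x n then x n else 0) atTop atTop ∧
      Tendsto (fun N => ∑ n ∈ Finset.range N, if x n < 0 then x n else 0) atTop atBot)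
    ↔ achv x = Set.univ :=
  stmt_1_general x hx
end

section
/- Let X be a Banach space and x : ℕ → X a sequence such that the set {n ∈ ℕ : x_n ≠ 0} is infinite and there exists δ > 0 with ‖x_n‖ ≥ δ for every n with x_n ≠ 0. Then the achievement set A(x) is countable and infinite. Moreover, if X is finite-dimensional, then A(x) is unbounded. -/
open Filter Topology

/-!
If the nonzero terms stay away from `0`, a subseries converges only when all but finitely many of
its terms vanish, so `achv x` consists of the countably many finite sums of terms.

The terms `x n` themselves lie in `achv x`. If `v ≠ 0` is a cluster point of `x`, then sums of
arbitrarily many terms close to `v` are arbitrarily large, so `achv x` is unbounded. Hence if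
`achv x` is relatively compact, then `x` has no cluster point other than `0` and therefore tends to
`0`. Infinitely many terms of norm at least `δ` rule this out, so `achv x` is not relatively
compact: in particular it is not finite, nor bounded when bounded sets are relatively compact.
-/

section TopologicalAddCommMonoid

variable {X : Type*} [AddCommMonoid X] [TopologicalSpace X]

theorem sum_mem_achv (x : ℕ → X) (F : Finset ℕ) : ∑ n ∈ F, x n ∈ achv x := by
  refine ⟨fun n => decide (n ∈ F), tendsto_const_nhds.congr' ?_⟩
  obtain ⟨M, hM⟩ := F.exists_nat_subset_range
  filter_upwards [eventually_ge_atTop M] with N hN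
  have hF : F ⊆ Finset.range N := hM.trans (Finset.range_mono hN)
  simp only [decide_eq_true_eq, Finset.sum_ite_mem, Finset.inter_eq_right.2 hF]

theorem apply_mem_achv (x : ℕ → X) (n : ℕ) : x n ∈ achv x := by
  simpa only [Finset.sum_singleton] using sum_mem_achv x {n}

theorem exists_eq_sum_range_of_tendsto_of_eventually_eq_zero [T2Space X] {y : ℕ → X} {s : X}
    (hs : Tendsto (fun N => ∑ n ∈ Finset.range N, y n) atTop (𝓝 s))
    (hy : ∀ᶠ n in atTop, y n = 0) : ∃ M, s = ∑ n ∈ Finset.range M, y n := by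
  obtain ⟨M, hM⟩ := eventually_atTop.1 hy
  refine ⟨M, tendsto_nhds_unique hs (tendsto_const_nhds.congr' ?_)⟩
  filter_upwards [eventually_ge_atTop M] with N hN
  exact (Finset.eventually_constant_sum hM hN).symm

end TopologicalAddCommMonoid

section TopologicalAddCommGroup

variable {X : Type*} [AddCommGroup X] [TopologicalSpace X] [IsTopologicalAddGroup X]

theorem tendsto_zero_of_tendsto_sum_range {y : ℕ → X} {s : X}
    (hs : Tendsto (fun N => ∑ n ∈ Finset.range N, y n) atTop (𝓝 s)) :
    Tendsto y atTop (𝓝 0) := by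
  simpa only [Function.comp_def, Finset.sum_range_succ_sub_sum, sub_self] using
    (hs.comp (tendsto_add_atTop_nat 1)).sub hs

theorem achv_eq_range_sum [T2Space X] {x : ℕ → X}
    (hx : ∀ᶠ v in 𝓝 0, v ∈ Set.range x → v = 0) :
    achv x = Set.range fun F : Finset ℕ => ∑ n ∈ F, x n := by
  refine Set.Subset.antisymm ?_ (Set.range_subset_iff.2 (sum_mem_achv x))
  rintro s ⟨ε, hs⟩
  have hzero : ∀ᶠ n in atTop, (if ε n then x n else 0) = 0 := by
    filter_upwards [(tendsto_zero_of_tendsto_sum_range hs).eventually hx] with n hn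
    split_ifs at hn ⊢
    · exact hn (Set.mem_range_self n)
    · rfl
  obtain ⟨M, rfl⟩ := exists_eq_sum_range_of_tendsto_of_eventually_eq_zero hs hzero
  exact ⟨{n ∈ Finset.range M | ε n}, Finset.sum_filter _ _⟩

theorem countable_achv [T2Space X] {x : ℕ → X} (hx : ∀ᶠ v in 𝓝 0, v ∈ Set.range x → v = 0) :
    (achv x).Countable :=
  achv_eq_range_sum hx ▸ Set.countable_range _

end TopologicalAddCommGroup

theorem norm_nsmul_eq_mul_norm {X : Type*} [SeminormedAddCommGroup X] [NormSMulClass ℤ X]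
    (k : ℕ) (v : X) : ‖k • v‖ = k * ‖v‖ := by
  rw [← natCast_zsmul, norm_smul, Int.norm_natCast]

theorem card_mul_half_norm_le_norm_sum {ι X : Type*} [SeminormedAddCommGroup X]
    [NormSMulClass ℤ X] {F : Finset ι} {x : ι → X} {v : X}
    (hF : ∀ i ∈ F, dist (x i) v ≤ ‖v‖ / 2) : F.card * (‖v‖ / 2) ≤ ‖∑ i ∈ F, x i‖ := by
  have hdist : dist (∑ i ∈ F, x i) (F.card • v) ≤ F.card * (‖v‖ / 2) := by
    simpa only [Finset.sum_const, nsmul_eq_mul] using dist_sum_sum_le_of_le F hF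
  have htri : F.card * ‖v‖ - ‖∑ i ∈ F, x i‖ ≤ dist (∑ i ∈ F, x i) (F.card • v) := by
    rw [dist_comm, dist_eq_norm, ← norm_nsmul_eq_mul_norm]
    exact norm_sub_norm_le _ _
  linarith

section NormedAddCommGroup

variable {X : Type*} [NormedAddCommGroup X] [NormSMulClass ℤ X] {x : ℕ → X}

theorem eq_zero_of_mapClusterPt_of_isBounded_achv {v : X} (hv : MapClusterPt v atTop x)
    (hb : Bornology.IsBounded (achv x)) : v = 0 := by
  by_contra hv0
  have hpos : 0 < ‖v‖ / 2 := half_pos (norm_pos_iff.2 hv0)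
  have hnear : {n | x n ∈ Metric.closedBall v (‖v‖ / 2)}.Infinite :=
    Nat.frequently_atTop_iff_infinite.1 (hv.frequently (Metric.closedBall_mem_nhds v hpos))
  obtain ⟨C, hC⟩ := hb.exists_norm_le
  obtain ⟨k, hk⟩ := exists_nat_gt (C / (‖v‖ / 2))
  obtain ⟨F, hF, rfl⟩ := hnear.exists_subset_card_eq k
  exact ((div_lt_iff₀ hpos).1 hk).not_ge <|
    (card_mul_half_norm_le_norm_sum fun n hn => hF hn).trans (hC _ (sum_mem_achv x F))

theorem tendsto_zero_of_isCompact_closure_achv (hK : IsCompact (closure (achv x))) :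
    Tendsto x atTop (𝓝 0) :=
  hK.tendsto_nhds_of_unique_mapClusterPt
    (.of_forall fun n => subset_closure (apply_mem_achv x n))
    fun _ _ hv => eq_zero_of_mapClusterPt_of_isBounded_achv hv (hK.isBounded.subset subset_closure)

theorem not_isCompact_closure_achv (hinf : {n | x n ≠ 0}.Infinite)
    (hx : ∀ᶠ v in 𝓝 0, v ∈ Set.range x → v = 0) : ¬ IsCompact (closure (achv x)) := by
  intro hK
  have hzero : ∀ᶠ n in atTop, x n = 0 :=
    ((tendsto_zero_of_isCompact_closure_achv hK).eventually hx).mono fun n hn => hn ⟨n, rfl⟩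
  exact Nat.frequently_atTop_iff_infinite.2 hinf (hzero.mono fun _ => not_not_intro)

end NormedAddCommGroup

theorem stmt_4_general {X : Type*} [NormedAddCommGroup X] [NormSMulClass ℤ X]
    (x : ℕ → X) (hinf : {n | x n ≠ 0}.Infinite)
    (hδ : ∃ δ > (0 : ℝ), ∀ n, x n ≠ 0 → δ ≤ ‖x n‖) :
    (achv x).Countable ∧ (achv x).Infinite ∧
      (ProperSpace X → ¬ Bornology.IsBounded (achv x)) := by
  obtain ⟨δ, hδ, hx⟩ := hδ
  have hisolated : ∀ᶠ v in 𝓝 0, v ∈ Set.range x → v = 0 := by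
    filter_upwards [Metric.ball_mem_nhds 0 hδ]
    rintro _ hn ⟨n, rfl⟩
    exact not_imp_comm.1 (hx n) (mem_ball_zero_iff.1 hn).not_ge
  have hK := not_isCompact_closure_achv hinf hisolated
  exact ⟨countable_achv hisolated, fun hfin => hK hfin.isCompact.closure,
    fun _ hb => hK hb.isCompact_closure⟩

/-- If infinitely many terms are nonzero and all nonzero terms have norm at
least `δ > 0`, then the achievement set is countably infinite; moreover if `X` is finite
dimensional then the achievement set is unbounded. -/
theorem stmt_4 {X : Type*} [NormedAddCommGroup X] [NormedSpace ℝ X] [CompleteSpace X]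
    (x : ℕ → X) (hinf : {n | x n ≠ 0}.Infinite)
    (hδ : ∃ δ > (0 : ℝ), ∀ n, x n ≠ 0 → δ ≤ ‖x n‖) :
    (achv x).Countable ∧ (achv x).Infinite ∧
      (FiniteDimensional ℝ X → ¬ Bornology.IsBounded (achv x)) := by
  have : NormSMulClass ℤ X := ⟨fun k v => by rw [norm_zsmul ℝ, Int.norm_cast_real]⟩
  exact (stmt_4_general x hinf hδ).imp_right (.imp_right fun h _ => h inferInstance)
end

section
/- Let X be a Banach space and x : ℕ → X a sequence such that for every δ > 0 there are infinitely many n with 0 < ‖x_n‖ < δ (equivalently, there is a subsequence of nonzero terms converging to 0). Then the achievement set A(x) contains a nonempty compact perfect set (in fact, a homeomorphic copy of the Cantor space {0,1}^ℕ). -/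
open Filter Topology

/-!
Pass to a subsequence of nonzero terms whose norms shrink by a factor of three at each step, so
that each norm exceeds the sum of all later ones. The subseries sums of such a sequence depend
continuously on the selected set of indices, by absolute convergence, and they determine that set,
because the first index at which two selections differ cannot be compensated by the later ones.
Hence they form a homeomorphic copy of the Cantor space inside the achievement set.
-/

section PerfectSpaces

instance perfectSpace_pi {ι : Type*} [Infinite ι] {Y : ι → Type*} [∀ i, TopologicalSpace (Y i)]
    [∀ i, Nontrivial (Y i)] : PerfectSpace (∀ i, Y i) := by
  classical
  refine perfectSpace_iff_forall_not_isolated.2 fun a => ?_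
  choose b hb using fun i => exists_ne (a i)
  have hlim : Tendsto (fun i => Function.update a i (b i)) cofinite (𝓝 a) := by
    refine tendsto_pi_nhds.2 fun j => tendsto_const_nhds.congr' ?_
    filter_upwards [(Set.finite_singleton j).compl_mem_cofinite] with i hij
    exact (Function.update_of_ne (Ne.symm hij) _ _).symm
  have hne (i : ι) : Function.update a i (b i) ≠ a := Function.update_ne_self_iff.2 (hb i)
  exact (tendsto_nhdsWithin_iff.2 ⟨hlim, .of_forall hne⟩).neBot

theorem preperfect_range_of_injective {Y Z : Type*} [TopologicalSpace Y] [PerfectSpace Y]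
    [TopologicalSpace Z] {f : Y → Z} (hf : Continuous f) (hinj : Function.Injective f) :
    Preperfect (Set.range f) := by
  rintro _ ⟨a, rfl⟩
  have hlim : Tendsto f (𝓝[≠] a) (𝓝[≠] f a) :=
    hf.continuousAt.tendsto.inf (tendsto_principal_principal.2 fun _ => hinj.ne)
  have hmem : Tendsto f (𝓝[≠] a) (𝓟 (Set.range f)) :=
    tendsto_principal.2 (.of_forall Set.mem_range_self)
  exact (tendsto_inf.2 ⟨hlim, hmem⟩).neBot

end PerfectSpaces

section RapidDecay

variable {u : ℕ → ℝ}

theorem exists_strictMono_lt_mul {r : ℝ} (hr : 0 < r)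
    (hu : ∀ δ > 0, {n | 0 < u n ∧ u n < δ}.Infinite) :
    ∃ φ : ℕ → ℕ, StrictMono φ ∧ (∀ k, 0 < u (φ k)) ∧ ∀ k, u (φ (k + 1)) < r * u (φ k) := by
  obtain ⟨n₀, hn₀, -⟩ := (hu 1 one_pos).nonempty
  have hnext (m : {n // 0 < u n}) : ∃ n : {n // 0 < u n}, m.1 < n ∧ u n < r * u m := by
    obtain ⟨n, ⟨hpos, hlt⟩, hmn⟩ := (hu (r * u m) (mul_pos hr m.2)).exists_gt m
    exact ⟨⟨n, hpos⟩, hmn, hlt⟩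
  choose nextIndex hgt hdecay using hnext
  let φ (k : ℕ) : {n // 0 < u n} := nextIndex^[k] ⟨n₀, hn₀⟩
  have hφ (k : ℕ) : φ (k + 1) = nextIndex (φ k) := Function.iterate_succ_apply' _ _ _
  refine ⟨fun k => φ k, strictMono_nat_of_lt_succ fun k => ?_, fun k => (φ k).2, fun k => ?_⟩
  · simpa only [hφ] using hgt (φ k)
  · simpa only [hφ] using hdecay (φ k)

theorem summable_of_succ_le_mul {r : ℝ} (hr : r < 1) (hnonneg : ∀ n, 0 ≤ u n)
    (hu : ∀ n, u (n + 1) ≤ r * u n) : Summable u :=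
  summable_of_ratio_norm_eventually_le hr <| .of_forall fun n => by
    simpa only [Real.norm_of_nonneg (hnonneg _)] using hu n

theorem tsum_tail_lt_of_succ_le_mul {r : ℝ} (hr : r < 1 / 2) (hpos : ∀ n, 0 < u n)
    (hu : ∀ n, u (n + 1) ≤ r * u n) (n : ℕ) : ∑' k, u (k + (n + 1)) < u n := by
  have hsum : Summable u := summable_of_succ_le_mul (by linarith) (fun m => (hpos m).le) hu
  have hsum_from (m : ℕ) : Summable fun k => u (k + m) := (summable_nat_add_iff m).2 hsum
  have hsplit : ∑' k, u (k + n) = u n + ∑' k, u (k + (n + 1)) := by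
    rw [(hsum_from n).tsum_eq_zero_add, zero_add]
    simp only [add_assoc, add_comm 1 n]
  have htail : ∑' k, u (k + (n + 1)) ≤ r * (u n + ∑' k, u (k + (n + 1))) := by
    rw [← hsplit, ← tsum_mul_left]
    exact (hsum_from (n + 1)).tsum_le_tsum (fun k => hu (k + n)) ((hsum_from n).mul_left r)
  have htail_nonneg : 0 ≤ ∑' k, u (k + (n + 1)) := tsum_nonneg fun _ => (hpos _).le
  have hhalf : r * (u n + ∑' k, u (k + (n + 1))) < 1 / 2 * (u n + ∑' k, u (k + (n + 1))) :=
    mul_lt_mul_of_pos_right hr (add_pos_of_pos_of_nonneg (hpos n) htail_nonneg)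
  linarith

end RapidDecay

theorem norm_le_tsum_norm_tail_of_hasSum_zero {X : Type*} [NormedAddCommGroup X] {d : ℕ → X}
    {n : ℕ} (hd : Summable fun m => ‖d m‖) (hsum : HasSum d 0) (hzero : ∀ m < n, d m = 0) :
    ‖d n‖ ≤ ∑' k, ‖d (k + (n + 1))‖ := by
  have hsplit : d n + ∑' k, d (k + (n + 1)) = 0 := by
    rw [← hsum.tsum_eq, ← hsum.summable.sum_add_tsum_nat_add (n + 1), Finset.sum_range_succ,
      Finset.sum_eq_zero fun m hm => hzero m (Finset.mem_range.1 hm), zero_add]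
  rw [eq_neg_of_add_eq_zero_left hsplit, norm_neg]
  exact norm_tsum_le_tsum_norm ((summable_nat_add_iff (n + 1)).2 hd)

section SubseriesSum

/-- The sum of the subseries of `y` selected by `ε`, in the unconditional sense of `tsum`: it is
meant for absolutely convergent `y`, and has the value `0` where the subseries is not summable. -/
noncomputable def subseriesSum {ι X : Type*} [AddCommMonoid X] [TopologicalSpace X] (y : ι → X)
    (ε : ι → Bool) : X :=
  ∑' i, if ε i then y i else 0

theorem mem_achv_of_hasSum_comp {X : Type*} [AddCommMonoid X] [TopologicalSpace X] {x : ℕ → X}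
    {ι : Type*} {φ : ι → ℕ} (hφ : Function.Injective φ) {ε : ι → Bool} {s : X}
    (hs : HasSum (fun i => if ε i then x (φ i) else 0) s) : s ∈ achv x := by
  let ε' : ℕ → Bool := Function.extend φ ε fun _ => false
  have hcomp : (fun n => if ε' n then x n else 0) ∘ φ = fun i => if ε i then x (φ i) else 0 := by
    ext i
    simp only [Function.comp_apply, ε', hφ.extend_apply]
  have hzero (n : ℕ) (hn : n ∉ Set.range φ) : (if ε' n then x n else 0) = 0 := by
    simp [ε', Function.extend_apply' _ _ _ hn]
  exact ⟨ε', ((hφ.hasSum_iff hzero).1 (hcomp ▸ hs)).tendsto_sum_nat⟩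

variable {X : Type*} [NormedAddCommGroup X]

theorem norm_ite_zero_le (b : Bool) (v : X) : ‖if b then v else 0‖ ≤ ‖v‖ := by
  cases b <;> simp

variable [CompleteSpace X]

theorem hasSum_subseriesSum {ι : Type*} {y : ι → X} (hy : Summable fun i => ‖y i‖)
    (ε : ι → Bool) : HasSum (fun i => if ε i then y i else 0) (subseriesSum y ε) :=
  (Summable.of_norm_bounded hy fun i => norm_ite_zero_le (ε i) (y i)).hasSum

theorem continuous_subseriesSum {ι : Type*} {y : ι → X} (hy : Summable fun i => ‖y i‖) :
    Continuous (subseriesSum y) :=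
  continuous_tsum
    (fun i => (continuous_of_discreteTopology (f := fun b : Bool => if b then y i else 0)).comp
      (continuous_apply i))
    hy fun i ε => norm_ite_zero_le (ε i) (y i)

theorem subseriesSum_injective {y : ℕ → X} (hy : Summable fun n => ‖y n‖)
    (htail : ∀ n, ∑' k, ‖y (k + (n + 1))‖ < ‖y n‖) : Function.Injective (subseriesSum y) := by
  intro ε ε' heq
  by_contra hne
  let n := PiNat.firstDiff ε ε'
  let d (m : ℕ) : X := (if ε m then y m else 0) - if ε' m then y m else 0
  have hd_le (m : ℕ) : ‖d m‖ ≤ ‖y m‖ := by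
    simp only [d]
    cases ε m <;> cases ε' m <;> simp
  have hd : Summable fun m => ‖d m‖ := .of_nonneg_of_le (fun _ => norm_nonneg _) hd_le hy
  have hd_sum : HasSum d 0 := by
    simpa only [heq, sub_self] using (hasSum_subseriesSum hy ε).sub (hasSum_subseriesSum hy ε')
  have hd_zero (m : ℕ) (hm : m < n) : d m = 0 := by
    simp only [d, PiNat.apply_eq_of_lt_firstDiff hm, sub_self]
  have hd_first : ‖d n‖ = ‖y n‖ := by
    have hn : ε n ≠ ε' n := PiNat.apply_firstDiff_ne hne
    revert hn
    simp only [d]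
    cases ε n <;> cases ε' n <;> simp
  have htail_le : ∑' k, ‖d (k + (n + 1))‖ ≤ ∑' k, ‖y (k + (n + 1))‖ :=
    ((summable_nat_add_iff (n + 1)).2 hd).tsum_le_tsum (fun _ => hd_le _)
      ((summable_nat_add_iff (n + 1)).2 hy)
  have hfirst_le := norm_le_tsum_norm_tail_of_hasSum_zero hd hd_sum hd_zero
  linarith [htail n]

end SubseriesSum

theorem stmt_5_general {X : Type*} [NormedAddCommGroup X] [CompleteSpace X]
    (x : ℕ → X) (h : ∀ δ > (0 : ℝ), {n | 0 < ‖x n‖ ∧ ‖x n‖ < δ}.Infinite) :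
    ∃ f : (ℕ → Bool) → X, IsClosedEmbedding f ∧ Set.range f ⊆ achv x := by
  obtain ⟨φ, hφ, hpos, hlt⟩ := exists_strictMono_lt_mul (r := 1 / 3) (by norm_num) h
  have hdecay (k : ℕ) : ‖x (φ (k + 1))‖ ≤ 1 / 3 * ‖x (φ k)‖ := (hlt k).le
  have hsum : Summable fun k => ‖x (φ k)‖ :=
    summable_of_succ_le_mul (by norm_num) (fun _ => norm_nonneg _) hdecay
  have hinj : Function.Injective (subseriesSum (x ∘ φ)) :=
    subseriesSum_injective hsum (tsum_tail_lt_of_succ_le_mul (by norm_num) hpos hdecay)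
  refine ⟨subseriesSum (x ∘ φ), (continuous_subseriesSum hsum).isClosedEmbedding hinj, ?_⟩
  rintro _ ⟨ε, rfl⟩
  exact mem_achv_of_hasSum_comp hφ.injective (hasSum_subseriesSum hsum ε)

/-- If for every `δ > 0` there are infinitely many `n` with `0 < ‖x n‖ < δ`
(i.e. some subsequence of nonzero terms tends to `0`), then the achievement set contains a
nonempty compact perfect set. -/
theorem stmt_5 {X : Type*} [NormedAddCommGroup X] [NormedSpace ℝ X] [CompleteSpace X]
    (x : ℕ → X) (h : ∀ δ > (0 : ℝ), {n | 0 < ‖x n‖ ∧ ‖x n‖ < δ}.Infinite) :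
    ∃ K : Set X, K ⊆ achv x ∧ K.Nonempty ∧ IsCompact K ∧ Perfect K := by
  obtain ⟨f, hf, hsub⟩ := stmt_5_general x h
  exact ⟨Set.range f, hsub, Set.range_nonempty f, isCompact_range hf.continuous,
    hf.isClosed_range, preperfect_range_of_injective hf.continuous hf.injective⟩
end

section
/- Let ∑ x_n be a conditionally convergent series in a Banach space X. Then the achievement set A(x) is perfectly dense-in-itself: for every s ∈ A(x) and every ε > 0, the intersection A(x) ∩ B(s, ε) of A(x) with the open ball of radius ε centered at s contains a nonempty compact perfect set. -/
open Filter Topology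

/-!
Select infinitely many nonzero terms `x (φ k)` whose norms have a sum below `ε`. Changing the
choice `e` behind `s` only at the indices `φ k`, in all possible ways, moves `s` by less than `ε`
and traces out a translate of the set of subsums of the absolutely convergent series `∑ x (φ k)`.
That set is a continuous image of the Cantor space `ℕ → Bool`, hence compact, and it has no isolated
points, because flipping a single late choice moves the subsum by a small nonzero amount.
-/

section Topology

variable {ι : Type*} [DecidableEq ι] {Y : ι → Type*} [∀ i, TopologicalSpace (Y i)]

lemma tendsto_update_cofinite (f g : ∀ i, Y i) :
    Tendsto (fun i => Function.update f i (g i)) cofinite (𝓝 f) := by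
  refine tendsto_pi_nhds.2 fun j => tendsto_nhds_of_eventually_eq ?_
  filter_upwards [eventually_cofinite_ne j] with i hij
  exact Function.update_of_ne hij.symm _ _

lemma preperfect_range_of_frequently_update_ne {Z : Type*} [TopologicalSpace Z]
    {F : (∀ i, Y i) → Z} (hF : Continuous F)
    (h : ∀ f, ∃ g : ∀ i, Y i, ∃ᶠ i in cofinite, F (Function.update f i (g i)) ≠ F f) :
    Preperfect (Set.range F) := by
  rintro _ ⟨f, rfl⟩
  obtain ⟨g, hg⟩ := h f
  have htendsto : Tendsto (fun i => F (Function.update f i (g i))) cofinite (𝓝 (F f)) :=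
    (hF.tendsto f).comp (tendsto_update_cofinite f g)
  exact accPt_iff_frequently.2 <| htendsto.frequently <|
    hg.mono fun i hi => ⟨hi, Set.mem_range_self _⟩

end Topology

section TermsOfSeries

lemma frequently_cofinite_ne_zero_of_not_summable {ι M : Type*} [AddCommMonoid M]
    [TopologicalSpace M] {f : ι → M} (hf : ¬ Summable f) : ∃ᶠ i in cofinite, f i ≠ 0 :=
  frequently_cofinite_iff_infinite.2 fun hfin => hf (summable_of_hasFiniteSupport hfin)

lemma tendsto_zero_of_tendsto_sum_range_s6 {G : Type*} [AddCommGroup G] [TopologicalSpace G]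
    [IsTopologicalAddGroup G] {f : ℕ → G} {t : G}
    (hf : Tendsto (fun N => ∑ n ∈ Finset.range N, f n) atTop (𝓝 t)) : Tendsto f atTop (𝓝 0) := by
  simpa only [Function.comp_def, Finset.sum_range_succ, add_sub_cancel_left, sub_self]
    using (hf.comp (tendsto_add_atTop_nat 1)).sub hf

lemma exists_strictMono_tsum_norm_lt {E : Type*} [SeminormedAddCommGroup E] {x : ℕ → E}
    {p : ℕ → Prop} (hx : ∀ r > (0 : ℝ), ∃ᶠ n in atTop, p n ∧ ‖x n‖ < r) {r : ℝ} (hr : 0 < r) :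
    ∃ φ : ℕ → ℕ, StrictMono φ ∧ (∀ k, p (φ k)) ∧
      (Summable fun k => ‖x (φ k)‖) ∧ ∑' k, ‖x (φ k)‖ < r := by
  obtain ⟨φ, hφ, h⟩ := extraction_forall_of_frequently fun k : ℕ =>
    hx (r / 2 / 2 / 2 ^ k) (by positivity)
  have hle : ∀ k, ‖x (φ k)‖ ≤ r / 2 / 2 / 2 ^ k := fun k => (h k).2.le
  have hsum : Summable fun k => ‖x (φ k)‖ :=
    .of_nonneg_of_le (fun _ => norm_nonneg _) hle (summable_geometric_two' _)
  refine ⟨φ, hφ, fun k => (h k).1, hsum, ?_⟩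
  calc ∑' k, ‖x (φ k)‖ ≤ ∑' k : ℕ, r / 2 / 2 / 2 ^ k :=
        hsum.tsum_le_tsum hle (summable_geometric_two' _)
    _ = r / 2 := tsum_geometric_two' _
    _ < r := half_lt_self hr

end TermsOfSeries

/-- The sum of the subfamily of `w` selected by `δ`. It is meant for absolutely convergent families,
for which the `tsum` never takes its junk value `0`. -/
noncomputable def subsum {ι X : Type*} [AddCommMonoid X] [TopologicalSpace X]
    (w : ι → X) (δ : ι → Bool) : X :=
  ∑' i, if δ i then w i else 0

lemma norm_ite_zero_le_s6 {E : Type*} [SeminormedAddCommGroup E] (p : Prop) [Decidable p] (v : E) :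
    ‖if p then v else 0‖ ≤ ‖v‖ := by
  split_ifs <;> simp

section Subsum

variable {ι X : Type*} [NormedAddCommGroup X] [CompleteSpace X] {w : ι → X}

lemma hasSum_subsum (hw : Summable fun i => ‖w i‖) (δ : ι → Bool) :
    HasSum (fun i => if δ i then w i else 0) (subsum w δ) :=
  (Summable.of_norm_bounded hw fun i => norm_ite_zero_le_s6 (δ i) (w i)).hasSum

lemma continuous_subsum (hw : Summable fun i => ‖w i‖) : Continuous (subsum w) :=
  continuous_tsum
    (fun i => (continuous_of_discreteTopology (f := fun b : Bool => if b then w i else 0)).comp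
      (continuous_apply i))
    hw fun i δ => norm_ite_zero_le_s6 (δ i) (w i)

lemma norm_subsum_sub_subsum_le (hw : Summable fun i => ‖w i‖) (δ e : ι → Bool) :
    ‖subsum w δ - subsum w e‖ ≤ ∑' i, ‖w i‖ := by
  rw [← ((hasSum_subsum hw δ).sub (hasSum_subsum hw e)).tsum_eq]
  refine tsum_of_norm_bounded hw.hasSum fun i => ?_
  cases δ i <;> cases e i <;> simp

lemma subsum_update [DecidableEq ι] (hw : Summable fun i => ‖w i‖) (δ : ι → Bool) (i : ι)
    (b : Bool) :
    subsum w (Function.update δ i b) =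
      (if b then w i else 0) - (if δ i then w i else 0) + subsum w δ := by
  refine (hasSum_subsum hw _).unique ?_
  convert (hasSum_subsum hw δ).update i (if b then w i else 0) using 1
  exact funext (Function.apply_update (fun j c => if c then w j else 0) δ i b)

lemma subsum_update_not_ne [DecidableEq ι] (hw : Summable fun i => ‖w i‖) (δ : ι → Bool) {i : ι}
    (hi : w i ≠ 0) : subsum w (Function.update δ i (!δ i)) ≠ subsum w δ := by
  rw [subsum_update hw, Ne, add_eq_right]
  cases δ i <;> simpa

lemma isCompact_range_add_subsum (hw : Summable fun i => ‖w i‖) (c : X) :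
    IsCompact (Set.range fun δ => c + subsum w δ) :=
  isCompact_range (continuous_const.add (continuous_subsum hw))

lemma perfect_range_add_subsum (hw : Summable fun i => ‖w i‖) (hne : ∃ᶠ i in cofinite, w i ≠ 0)
    (c : X) : Perfect (Set.range fun δ => c + subsum w δ) := by
  classical
  refine ⟨(isCompact_range_add_subsum hw c).isClosed, preperfect_range_of_frequently_update_ne
    (continuous_const.add (continuous_subsum hw)) fun δ => ⟨fun i => !δ i, ?_⟩⟩
  exact hne.mono fun i hi => (add_right_injective c).ne (subsum_update_not_ne hw δ hi)

end Subsum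

section AchievementSet

variable {X : Type*} [NormedAddCommGroup X] [CompleteSpace X] {x : ℕ → X}

lemma sub_subsum_add_subsum_mem_achv {ι : Type*} {φ : ι → ℕ} (hφ : Function.Injective φ)
    (hw : Summable fun i => ‖x (φ i)‖) {e : ℕ → Bool} {s : X}
    (hs : Tendsto (fun N => ∑ n ∈ Finset.range N, if e n then x n else 0) atTop (𝓝 s))
    (δ : ι → Bool) : s - subsum (x ∘ φ) (e ∘ φ) + subsum (x ∘ φ) δ ∈ achv x := by
  have hchange : HasSum
      (Function.extend φ
        (fun i => (if δ i then x (φ i) else 0) - (if e (φ i) then x (φ i) else 0)) 0)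
      (subsum (x ∘ φ) δ - subsum (x ∘ φ) (e ∘ φ)) :=
    (hasSum_extend_zero hφ).2 ((hasSum_subsum hw δ).sub (hasSum_subsum hw (e ∘ φ)))
  refine ⟨Function.extend φ δ e, ?_⟩
  rw [sub_add_eq_add_sub, add_sub_assoc]
  refine (hs.add hchange.tendsto_sum_nat).congr fun N => ?_
  rw [← Finset.sum_add_distrib]
  refine Finset.sum_congr rfl fun n _ => ?_
  by_cases hn : ∃ i, φ i = n
  · obtain ⟨i, rfl⟩ := hn
    simp only [hφ.extend_apply, add_sub_cancel]
  · simp only [Function.extend_apply' _ _ _ hn, Pi.zero_apply, add_zero]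

theorem stmt_6_general (hx : ∀ r > (0 : ℝ), ∃ᶠ n in atTop, x n ≠ 0 ∧ ‖x n‖ < r) :
    ∀ s ∈ achv x, ∀ ε > (0 : ℝ), ∃ K : Set X,
      K ⊆ achv x ∩ Metric.ball s ε ∧ K.Nonempty ∧ IsCompact K ∧ Perfect K := by
  rintro s ⟨e, hs⟩ ε hε
  obtain ⟨φ, hφ, hφne, hsum, hlt⟩ := exists_strictMono_tsum_norm_lt hx hε
  refine ⟨Set.range fun δ => s - subsum (x ∘ φ) (e ∘ φ) + subsum (x ∘ φ) δ, ?_,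
    Set.range_nonempty _, isCompact_range_add_subsum hsum _,
    perfect_range_add_subsum hsum (Frequently.of_forall hφne) _⟩
  rintro _ ⟨δ, rfl⟩
  have hdist : dist (s - subsum (x ∘ φ) (e ∘ φ) + subsum (x ∘ φ) δ) s < ε := by
    rw [sub_add_eq_add_sub, add_sub_assoc, dist_self_add_left]
    exact (norm_subsum_sub_subsum_le hsum δ (e ∘ φ)).trans_lt hlt
  exact ⟨sub_subsum_add_subsum_mem_achv hφ.injective hsum hs δ, hdist⟩

end AchievementSet

lemma frequently_ne_zero_and_norm_lt_of_not_summable_norm {E : Type*} [SeminormedAddCommGroup E]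
    {x : ℕ → E} (hx : Tendsto x atTop (𝓝 0)) (hnabs : ¬ Summable fun n => ‖x n‖) {r : ℝ}
    (hr : 0 < r) : ∃ᶠ n in atTop, x n ≠ 0 ∧ ‖x n‖ < r := by
  have hne : ∃ᶠ n in atTop, ‖x n‖ ≠ 0 :=
    Nat.cofinite_eq_atTop ▸ frequently_cofinite_ne_zero_of_not_summable hnabs
  refine (hne.mono fun n => ?_).and_eventually (hx.norm.eventually_lt_const (by rwa [norm_zero]))
  exact mt fun hn => by rw [hn, norm_zero]

/-- If `∑ x_n` is conditionally convergent in a Banach space, then `A(x)` is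
perfectly dense-in-itself: for every `s ∈ A(x)` and `ε > 0`, the set `A(x) ∩ B(s, ε)`
contains a nonempty compact perfect set. -/
theorem stmt_6 {X : Type*} [NormedAddCommGroup X] [NormedSpace ℝ X] [CompleteSpace X]
    (x : ℕ → X)
    (hconv : ∃ s, Tendsto (fun N => ∑ n ∈ Finset.range N, x n) atTop (𝓝 s))
    (hnabs : ¬ Summable fun n => ‖x n‖) :
    ∀ s ∈ achv x, ∀ ε > (0 : ℝ), ∃ K : Set X,
      K ⊆ achv x ∩ Metric.ball s ε ∧ K.Nonempty ∧ IsCompact K ∧ Perfect K := by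
  obtain ⟨t, ht⟩ := hconv
  exact stmt_6_general fun r hr => frequently_ne_zero_and_norm_lt_of_not_summable_norm
    (tendsto_zero_of_tendsto_sum_range_s6 ht) hnabs hr
end

section
/- Let ∑ x_n be a conditionally convergent series in a Banach space X. Then SR(x) ⊆ closure(A(x)), i.e., the sum range of the series is contained in the closure of its achievement set. -/
open Filter Topology

/-- The sum range of a sequence: all sums of convergent rearrangements. -/
def sumRange {X : Type*} [AddCommMonoid X] [TopologicalSpace X] (x : ℕ → X) : Set X :=
  {s | ∃ σ : Equiv.Perm ℕ,
    Tendsto (fun N => ∑ n ∈ Finset.range N, x (σ n)) atTop (𝓝 s)}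

theorem finset_sum_mem_achv {X : Type*} [AddCommMonoid X] [TopologicalSpace X] (x : ℕ → X)
    (F : Finset ℕ) : ∑ n ∈ F, x n ∈ achv x := by
  have hasSum_ite : HasSum (fun n => if n ∈ F then x n else 0)
      (∑ n ∈ F, if n ∈ F then x n else 0) :=
    hasSum_sum_of_ne_finset_zero fun _ hn => if_neg hn
  refine ⟨fun n => decide (n ∈ F), ?_⟩
  simpa only [decide_eq_true_eq, Finset.sum_ite_mem, Finset.inter_self]
    using hasSum_ite.tendsto_sum_nat

theorem stmt_8_general {X : Type*} [AddCommMonoid X] [TopologicalSpace X] (x : ℕ → X) :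
    sumRange x ⊆ closure (achv x) := by
  rintro s ⟨σ, hσ⟩
  have partialSum_mem_achv (N : ℕ) : ∑ n ∈ Finset.range N, x (σ n) ∈ achv x := by
    simpa only [Finset.sum_map, Equiv.coe_toEmbedding]
      using finset_sum_mem_achv x ((Finset.range N).map σ.toEmbedding)
  exact mem_closure_of_tendsto hσ (Eventually.of_forall partialSum_mem_achv)

/-- For a conditionally convergent series in a Banach space,
`SR(x) ⊆ closure (A(x))`. -/
theorem stmt_8 {X : Type*} [NormedAddCommGroup X] [NormedSpace ℝ X] [CompleteSpace X]
    (x : ℕ → X)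
    (hconv : ∃ s, Tendsto (fun N => ∑ n ∈ Finset.range N, x n) atTop (𝓝 s))
    (hnabs : ¬ Summable fun n => ‖x n‖) :
    sumRange x ⊆ closure (achv x) :=
  stmt_8_general x
end

section
/- Let ∑ y_n be an absolutely convergent series in ℝ^m with y_n ≠ 0 for every n ∈ ℕ. Then for every extreme point a of the achievement set A(y) there is a unique sequence ε : ℕ → {0,1} such that a = ∑_{n} ε(n)·y(n). -/
open Filter Topology

section General

variable {X : Type*} [AddCommGroup X] [TopologicalSpace X] [ContinuousAdd X]
  {y : ℕ → X} {a : X} {ε δ : ℕ → Bool} {k : ℕ}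

theorem tendsto_sum_range_update
    (h : Tendsto (fun N => ∑ n ∈ Finset.range N, y n) atTop (𝓝 a)) (k : ℕ) (v : X) :
    Tendsto (fun N => ∑ n ∈ Finset.range N, Function.update y k v n) atTop
      (𝓝 (a - y k + v)) := by
  rw [sub_add_eq_add_sub, add_sub_assoc]
  refine (h.add_const (v - y k)).congr' ?_
  filter_upwards [eventually_gt_atTop k] with N hN
  have hk : k ∈ Finset.range N := Finset.mem_range.2 hN
  rw [Finset.sum_update_of_mem hk, Finset.sum_eq_add_sum_sdiff_singleton_of_mem hk]
  abel

theorem sub_digit_add_digit_mem_achv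
    (h : Tendsto (fun N => ∑ n ∈ Finset.range N, if ε n then y n else 0) atTop (𝓝 a))
    (k : ℕ) (d : Bool) :
    a - (if ε k then y k else 0) + (if d then y k else 0) ∈ achv y := by
  refine ⟨Function.update ε k d, ?_⟩
  simpa only [Function.apply_update fun n (b : Bool) => if b then y n else 0]
    using tendsto_sum_range_update h k (if d then y k else 0)

theorem sub_mem_achv
    (h : Tendsto (fun N => ∑ n ∈ Finset.range N, if ε n then y n else 0) atTop (𝓝 a))
    (hk : ε k = true) : a - y k ∈ achv y := by
  simpa [hk] using sub_digit_add_digit_mem_achv h k false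

theorem add_mem_achv
    (h : Tendsto (fun N => ∑ n ∈ Finset.range N, if ε n then y n else 0) atTop (𝓝 a))
    (hk : ε k = false) : a + y k ∈ achv y := by
  simpa [hk] using sub_digit_add_digit_mem_achv h k true

/-- If `ε` used `y k` and `δ` did not, then omitting `y k` from the first representation and
adding it to the second would exhibit `a` as the midpoint of `a - y k` and `a + y k`. -/
theorem digits_le_of_extreme (hne : ∀ n, 2 • y n ≠ 0)
    (hext : ∀ b ∈ achv y, ∀ c ∈ achv y, 2 • a = b + c → b = c)
    (hε : Tendsto (fun N => ∑ n ∈ Finset.range N, if ε n then y n else 0) atTop (𝓝 a))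
    (hδ : Tendsto (fun N => ∑ n ∈ Finset.range N, if δ n then y n else 0) atTop (𝓝 a)) :
    ε ≤ δ := by
  refine fun k => Bool.le_iff_imp.2 fun hεk => by_contra fun hδk => hne k ?_
  have endpoints_eq : a - y k = a + y k :=
    hext _ (sub_mem_achv hε hεk) _ (add_mem_achv hδ (Bool.eq_false_of_not_eq_true hδk)) (by abel)
  calc
    2 • y k = (a + y k) - (a - y k) := by abel
    _ = 0 := sub_eq_zero.2 endpoints_eq.symm

theorem stmt_10_general (hne : ∀ n, 2 • y n ≠ 0) (ha : a ∈ achv y)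
    (hext : ∀ b ∈ achv y, ∀ c ∈ achv y, 2 • a = b + c → b = c) :
    ∃! ε : ℕ → Bool,
      Tendsto (fun N => ∑ n ∈ Finset.range N, if ε n then y n else 0) atTop (𝓝 a) := by
  obtain ⟨ε, hε⟩ := ha
  exact ⟨ε, hε, fun δ hδ =>
    le_antisymm (digits_le_of_extreme hne hext hδ hε) (digits_le_of_extreme hne hext hε hδ)⟩

end General

/-- If `∑ y_n` is absolutely convergent in `ℝ^m` with all terms nonzero, then
every extreme point `a` of `A(y)` has a unique representation `a = ∑ ε_n y_n` with
`ε ∈ {0,1}^ℕ`. -/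
theorem stmt_10 (m : ℕ) (y : ℕ → EuclideanSpace ℝ (Fin m))
    (hy : Summable fun n => ‖y n‖) (hne : ∀ n, y n ≠ 0)
    (a : EuclideanSpace ℝ (Fin m)) (ha : a ∈ achv y)
    (hext : ∀ b ∈ achv y, ∀ c ∈ achv y, a = (2⁻¹ : ℝ) • (b + c) → b = c) :
    ∃! ε : ℕ → Bool,
      Tendsto (fun N => ∑ n ∈ Finset.range N, if ε n then y n else 0) atTop (𝓝 a) := by
  have : IsAddTorsionFree (EuclideanSpace ℝ (Fin m)) := .of_module_rat _
  exact stmt_10_general (fun n => smul_ne_zero two_ne_zero (hne n)) ha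
    fun b hb c hc hmid => hext b hb c hc (by rw [← hmid]; module)
end

section
/- Let ∑ x_n be a conditionally convergent series in ℝ^k with sum range SR(x) = ℝ^k, and let ∑ y_n be an absolutely convergent series in ℝ^m with y_n ≠ 0 for every n ∈ ℕ. Then the achievement set A((x_n, y_n)_n) of the sequence of pairs in ℝ^k × ℝ^m is not a closed set. -/
/-!
The achievement set `A` of the pairs is too thin to contain a whole fibre of its closure.

Finite sums of the `x n` over tails of `ℕ` are dense, whereas those of the `y n` are small.
Correcting a long partial subsum of the pairs by such a tail sum shows that, as soon as `t` is a
subsum of `∑ y n`, the whole fibre over `t` lies in the closure of `A`.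

On the other hand some `t` has only one representation as a subsum of `∑ y n`, so that the fibre of
`A` over it has at most one point: take a functional `f` with `f (y n) ≠ 0` for all `n`, which
exists by the Baire category theorem, and let `t` be the sum of the `y n` with `f (y n) > 0`. Any
other choice of terms gives `f` a strictly smaller value.
-/

open Filter Topology

/-- `HasSubseriesSum x ε s` means that the terms of `x` selected by `ε`, added in their given order,
have sum `s`; thus `s ∈ achv x` unfolds to `∃ ε, HasSubseriesSum x ε s`. -/
def HasSubseriesSum {X : Type*} [AddCommMonoid X] [TopologicalSpace X] (x : ℕ → X) (ε : ℕ → Bool)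
    (s : X) : Prop :=
  Tendsto (fun N => ∑ n ∈ Finset.range N, if ε n then x n else 0) atTop (𝓝 s)

namespace HasSubseriesSum

variable {X Y : Type*} [AddCommMonoid X] [TopologicalSpace X] [AddCommMonoid Y]
  [TopologicalSpace Y]

lemma map {x : ℕ → X} {ε : ℕ → Bool} {s : X} (h : HasSubseriesSum x ε s)
    (f : X →+ Y) (hf : Continuous f) : HasSubseriesSum (fun n => f (x n)) ε (f s) := by
  simpa only [HasSubseriesSum, Function.comp_def, map_sum, apply_ite f, map_zero]
    using (hf.tendsto s).comp h

lemma fst {z : ℕ → X × Y} {ε : ℕ → Bool} {p : X × Y}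
    (h : HasSubseriesSum z ε p) : HasSubseriesSum (fun n => (z n).1) ε p.1 :=
  h.map (AddMonoidHom.fst X Y) continuous_fst

lemma snd {z : ℕ → X × Y} {ε : ℕ → Bool} {p : X × Y}
    (h : HasSubseriesSum z ε p) : HasSubseriesSum (fun n => (z n).2) ε p.2 :=
  h.map (AddMonoidHom.snd X Y) continuous_snd

end HasSubseriesSum

lemma sum_mem_achv_s11 {X : Type*} [AddCommMonoid X] [TopologicalSpace X] (z : ℕ → X)
    (G : Finset ℕ) : ∑ n ∈ G, z n ∈ achv z := by
  have h : HasSum (fun n => if n ∈ G then z n else 0) (∑ n ∈ G, if n ∈ G then z n else 0) :=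
    hasSum_sum_of_ne_finset_zero fun n hn => if_neg hn
  rw [Finset.sum_ite_mem, Finset.inter_self] at h
  exact ⟨fun n => decide (n ∈ G), by simpa only [decide_eq_true_eq] using h.tendsto_sum_nat⟩

section Closure

variable {E F : Type*} [AddCommGroup E] [TopologicalSpace E] [IsTopologicalAddGroup E]
  [AddCommGroup F] [TopologicalSpace F] [IsTopologicalAddGroup F] {x : ℕ → E} {y : ℕ → F}

lemma dense_image_sum_disjoint_range (hx : Dense (sumRange x)) (N : ℕ) :
    Dense ((fun T => ∑ n ∈ T, x n) '' {T : Finset ℕ | Disjoint (Finset.range N) T}) := by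
  rw [dense_iff_inter_open]
  rintro U hU ⟨u, hu⟩
  have hU' : IsOpen ((· - ∑ n ∈ Finset.range N, x n) ⁻¹' U) := hU.preimage (continuous_sub_right _)
  obtain ⟨s, ⟨σ, hσ⟩, hsU⟩ :=
    hx.exists_mem_open hU' ⟨u + ∑ n ∈ Finset.range N, x n, by simpa using hu⟩
  have hσ_atTop : Tendsto (fun M => (Finset.range M).image σ) atTop atTop :=
    (tendsto_finset_image_atTop_atTop σ.apply_symm_apply).comp tendsto_finset_range
  obtain ⟨M, hMU, hNM⟩ := ((hσ.eventually (hU'.mem_nhds hsU)).and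
    (hσ_atTop.eventually_ge_atTop (Finset.range N))).exists
  refine ⟨_, ?_, (Finset.range M).image σ \ Finset.range N, Finset.disjoint_sdiff, rfl⟩
  simpa only [Finset.sum_sdiff_eq_sub hNM, Finset.sum_image σ.injective.injOn] using hMU

lemma HasSubseriesSum.exists_forall_disjoint_sum_add_sum_mem {ε : ℕ → Bool} {t : F}
    (ht : HasSubseriesSum y ε t) (hy : Summable y) {V : Set F} (hV : V ∈ 𝓝 t) :
    ∃ N, ∃ P ⊆ Finset.range N, ∀ T, Disjoint (Finset.range N) T →
      ∑ n ∈ P, y n + ∑ n ∈ T, y n ∈ V := by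
  have hadd : Tendsto (fun p : F × F => p.1 + p.2) (𝓝 t ×ˢ 𝓝 0) (𝓝 t) := by
    simpa only [nhds_prod_eq, add_zero] using tendsto_add (M := F) (a := t) (b := 0)
  obtain ⟨A, hA, B, hB, hAB⟩ := mem_prod_iff.1 (hadd hV)
  obtain ⟨S, hS⟩ := hy.vanishing hB
  obtain ⟨N, hNA, hSN⟩ := ((ht.eventually hA).and
    (tendsto_finset_range.eventually_ge_atTop S)).exists
  refine ⟨N, (Finset.range N).filter (ε ·), Finset.filter_subset _ _, fun T hT => ?_⟩
  rw [Finset.sum_filter]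
  exact hAB (Set.mk_mem_prod hNA (hS T (hT.mono_left hSN).symm))

lemma HasSubseriesSum.prodMk_mem_closure_achv {ε : ℕ → Bool} {t : F}
    (ht : HasSubseriesSum y ε t) (hx : Dense (sumRange x)) (hy : Summable y) (s : E) :
    (s, t) ∈ closure (achv fun n => (x n, y n)) := by
  rw [mem_closure_iff_nhds_basis ((nhds_basis_opens s).prod_nhds (𝓝 t).basis_sets)]
  rintro ⟨U, V⟩ ⟨⟨hsU, hU⟩, hV⟩
  obtain ⟨N, P, hPN, hPV⟩ := ht.exists_forall_disjoint_sum_add_sum_mem hy hV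
  obtain ⟨_, ⟨T, hT, rfl⟩, hTU⟩ := (dense_image_sum_disjoint_range hx N).exists_mem_open
    (hU.preimage (continuous_const_add (∑ n ∈ P, x n)))
    ⟨-(∑ n ∈ P, x n) + s, by simpa using hsU⟩
  refine ⟨_, sum_mem_achv_s11 _ (P ∪ T), ?_⟩
  rw [Finset.sum_union (hT.mono_left hPN), ← prod_mk_sum, ← prod_mk_sum]
  exact ⟨hTU, hPV T hT⟩

theorem not_isClosed_achv_prodMk [T2Space E] [Nontrivial E] (hx : Dense (sumRange x))
    (hy : Summable y) {t : F} (ht : ∃! ε, HasSubseriesSum y ε t) :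
    ¬ IsClosed (achv fun n => (x n, y n)) := by
  intro hclosed
  obtain ⟨η, hη, hη_unique⟩ := ht
  have hsum (s : E) : HasSubseriesSum x η s := by
    obtain ⟨ε, hε : HasSubseriesSum _ ε (s, t)⟩ :=
      hclosed.closure_subset (hη.prodMk_mem_closure_achv hx hy s)
    exact hη_unique ε hε.snd ▸ hε.fst
  obtain ⟨s, s', hs⟩ := exists_pair_ne E
  exact hs (tendsto_nhds_unique (hsum s) (hsum s'))

end Closure

lemma HasSubseriesSum.eq_decide_pos {a : ℕ → ℝ} (ha : ∀ n, a n ≠ 0) {s : ℝ}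
    (hpos : HasSubseriesSum a (fun n => decide (0 < a n)) s) {ε : ℕ → Bool}
    (hε : HasSubseriesSum a ε s) : ε = fun n => decide (0 < a n) := by
  let d : ℕ → ℝ := fun n => (if decide (0 < a n) then a n else 0) - if ε n then a n else 0
  have hd_nonneg : 0 ≤ d := fun n => by
    simp only [d, decide_eq_true_eq, Pi.zero_apply]
    split_ifs <;> linarith
  have hd_sum : HasSum d 0 := by
    rw [hasSum_iff_tendsto_nat_of_nonneg hd_nonneg]
    simpa only [d, Finset.sum_sub_distrib, sub_self] using hpos.sub hε
  have hd_zero := (hasSum_zero_iff_of_nonneg hd_nonneg).1 hd_sum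
  funext n
  have hn : d n = 0 := congrFun hd_zero n
  simp only [d] at hn
  by_cases h : 0 < a n <;> cases hεn : ε n <;> simp_all

lemma exists_strongDual_forall_apply_ne_zero {ι 𝕜 V : Type*} [Countable ι] [RCLike 𝕜]
    [NormedAddCommGroup V] [NormedSpace 𝕜 V] {v : ι → V} (hv : ∀ i, v i ≠ 0) :
    ∃ f : StrongDual 𝕜 V, ∀ i, f (v i) ≠ 0 := by
  let K (i : ι) : Submodule 𝕜 (StrongDual 𝕜 V) :=
    (ContinuousLinearMap.apply 𝕜 𝕜 (v i)).ker
  have hK_closed (i : ι) : IsClosed (K i : Set (StrongDual 𝕜 V)) :=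
    (ContinuousLinearMap.apply 𝕜 𝕜 (v i)).isClosed_ker
  have hK_dense (i : ι) : Dense (K i : Set (StrongDual 𝕜 V))ᶜ := by
    rw [← interior_eq_empty_iff_dense_compl, ← Set.not_nonempty_iff_eq_empty]
    intro hint
    obtain ⟨f, hf⟩ := SeparatingDual.exists_ne_zero (R := 𝕜) (hv i)
    exact hf ((K i).eq_top_of_nonempty_interior' hint ▸ Submodule.mem_top : f ∈ K i)
  obtain ⟨f, hf⟩ := (dense_iInter_of_isOpen (fun i => (hK_closed i).isOpen_compl) hK_dense).nonempty
  exact ⟨f, Set.mem_iInter.1 hf⟩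

lemma exists_existsUnique_hasSubseriesSum {F : Type*} [NormedAddCommGroup F]
    [NormedSpace ℝ F] [CompleteSpace F] {y : ℕ → F} (hy : Summable y) (hne : ∀ n, y n ≠ 0) :
    ∃ t, ∃! ε, HasSubseriesSum y ε t := by
  obtain ⟨f, hf⟩ := exists_strongDual_forall_apply_ne_zero (𝕜 := ℝ) hne
  have hsummable : Summable ({n | 0 < f (y n)}.indicator y) := hy.indicator _
  obtain ⟨t, ht⟩ : ∃ t, HasSubseriesSum y (fun n => decide (0 < f (y n))) t :=
    ⟨_, by simpa [HasSubseriesSum, Set.indicator_apply] using hsummable.hasSum.tendsto_sum_nat⟩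
  have hmap {ε} (hε : HasSubseriesSum y ε t) : HasSubseriesSum (fun n => f (y n)) ε (f t) :=
    hε.map (f : F →+ ℝ) f.continuous
  exact ⟨t, _, ht, fun ε hε => (hmap ht).eq_decide_pos hf (hmap hε)⟩

lemma nontrivial_of_not_summable_norm {ι E : Type*} [SeminormedAddGroup E] {x : ι → E}
    (hx : ¬ Summable fun i => ‖x i‖) : Nontrivial E := by
  by_contra! h
  exact hx (by simp [Subsingleton.elim (x _) 0, summable_zero])

theorem stmt_11_general {E F : Type*} [AddCommGroup E] [TopologicalSpace E]
    [IsTopologicalAddGroup E] [T2Space E] [Nontrivial E] [NormedAddCommGroup F] [NormedSpace ℝ F]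
    [CompleteSpace F] {x : ℕ → E} {y : ℕ → F} (hx : Dense (sumRange x)) (hy : Summable y)
    (hne : ∀ n, y n ≠ 0) : ¬ IsClosed (achv fun n => (x n, y n)) :=
  let ⟨_, ht⟩ := exists_existsUnique_hasSubseriesSum hy hne
  not_isClosed_achv_prodMk hx hy ht

/-- If `∑ x_n` is conditionally convergent in `ℝ^k` with `SR(x) = ℝ^k` and
`∑ y_n` is absolutely convergent in `ℝ^m` with all terms nonzero, then the achievement set
of the sequence of pairs `(x_n, y_n)` is not closed. -/
theorem stmt_11 (k m : ℕ) (x : ℕ → EuclideanSpace ℝ (Fin k))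
    (y : ℕ → EuclideanSpace ℝ (Fin m))
    (hconv : ∃ s, Tendsto (fun N => ∑ n ∈ Finset.range N, x n) atTop (𝓝 s))
    (hnabs : ¬ Summable fun n => ‖x n‖)
    (hsr : sumRange x = Set.univ)
    (hy : Summable fun n => ‖y n‖) (hne : ∀ n, y n ≠ 0) :
    ¬ IsClosed (achv (fun n => (x n, y n))) := by
  have : Nontrivial (EuclideanSpace ℝ (Fin k)) := nontrivial_of_not_summable_norm hnabs
  exact stmt_11_general (hsr ▸ dense_univ) hy.of_norm hne
end

section
/- Let ∑ x_n be a conditionally convergent series in ℝ, and let E = {ε ∈ {0,1}^ℕ : the partial sums ∑_{n<N} ε(n)·x(n) converge as N → ∞}, a subset of the Cantor space {0,1}^ℕ with the product topology. Then: (a) E is an F_{σδ} set (a countable intersection of countable unions of closed sets); and (b) there exists a continuous map ψ : ℕ^ℕ → {0,1}^ℕ (from the Baire space with the product topology) such that for every v ∈ ℕ^ℕ, ψ(v) ∈ E if and only if v(n) → ∞ as n → ∞. -/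
open Filter Topology

/-!
The set `E` is `F_{σδ}` because a sequence of continuous functions into a complete space is Cauchy
at a point exactly when a countable family of closed conditions holds.

For the reduction, the terms are read off one after the other and each is either skipped or
selected, so that the running sum moves towards a current target `t k`. When the distance to `t k`
has become at most the size of the term just read, the target `t (k + 1)` takes its place. Since
neither the positive nor the negative parts of the terms are summable, every target is reached, and
since the terms tend to zero, the running sum converges exactly when the sequence of targets does.
The targets `t k = (-1) ^ k / (v k + 1)` alternate in sign, hence converge exactly when they tend
to zero, that is, when `v k → ∞`. Only finitely many values of `v` decide whether a given term is
selected, so the selection depends continuously on `v`.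
-/

section Convergence

theorem exists_isClosed_setOf_tendsto_eq_iInter_iUnion {X E : Type*} [TopologicalSpace X]
    [PseudoMetricSpace E] [CompleteSpace E] {f : ℕ → X → E} (hf : ∀ n, Continuous (f n)) :
    ∃ F : ℕ → ℕ → Set X, (∀ i j, IsClosed (F i j)) ∧
      {a | ∃ l, Tendsto (fun n => f n a) atTop (𝓝 l)} = ⋂ i, ⋃ j, F i j := by
  refine ⟨fun i j => ⋂ p ≥ j, {a | dist (f p a) (f j a) ≤ 1 / ((i : ℝ) + 1)},
    fun i j => isClosed_biInter fun p _ =>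
      isClosed_le ((hf p).dist (hf j)) continuous_const, ?_⟩
  ext a
  simp only [Set.mem_ofPred_eq, Set.mem_iInter, Set.mem_iUnion]
  constructor
  · rintro ⟨l, hl⟩ i
    obtain ⟨j, hj⟩ := Metric.cauchySeq_iff'.1 hl.cauchySeq (1 / ((i : ℝ) + 1))
      Nat.one_div_pos_of_nat
    exact ⟨j, fun p hp => (hj p hp).le⟩
  · intro h
    refine cauchySeq_tendsto_of_complete (Metric.cauchySeq_iff'.2 fun r hr => ?_)
    obtain ⟨i, hi⟩ := exists_nat_one_div_lt hr
    obtain ⟨j, hj⟩ := h i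
    exact ⟨j, fun p hp => (hj p hp).trans_lt hi⟩

theorem tendsto_zero_of_tendsto_sum_range_s12 {E : Type*} [AddCommGroup E] [TopologicalSpace E]
    [ContinuousSub E] {x : ℕ → E} {s : E}
    (h : Tendsto (fun N => ∑ n ∈ Finset.range N, x n) atTop (𝓝 s)) :
    Tendsto x atTop (𝓝 0) := by
  simpa [Function.comp_def, Finset.sum_range_succ] using
    (h.comp (tendsto_add_atTop_nat 1)).sub h

theorem summable_abs_of_summable_posPart {x : ℕ → ℝ} {s : ℝ}
    (h : Tendsto (fun N => ∑ n ∈ Finset.range N, x n) atTop (𝓝 s))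
    (hpos : Summable fun n => (x n)⁺) : Summable fun n => |x n| := by
  have habs : ∀ n, |x n| = 2 * (x n)⁺ - x n := fun n => by
    linarith [posPart_add_negPart (x n), posPart_sub_negPart (x n)]
  refine ((hasSum_iff_tendsto_nat_of_nonneg (fun n => abs_nonneg (x n)) _).2
    (((hpos.hasSum.tendsto_sum_nat.const_mul 2).sub h).congr fun N => ?_)).summable
  simp only [habs, Finset.sum_sub_distrib, Finset.mul_sum]

theorem summable_abs_of_summable_negPart {x : ℕ → ℝ} {s : ℝ}
    (h : Tendsto (fun N => ∑ n ∈ Finset.range N, x n) atTop (𝓝 s))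
    (hneg : Summable fun n => (x n)⁻) : Summable fun n => |x n| := by
  simpa only [abs_neg] using summable_abs_of_summable_posPart (x := fun n => -x n)
    (by simpa only [Finset.sum_neg_distrib] using h.neg) (by simpa only [posPart_neg] using hneg)

theorem summable_of_le_sub_succ {f u : ℕ → ℝ} {N : ℕ} (hf : ∀ n, 0 ≤ f n)
    (hu : ∀ n ≥ N, 0 ≤ u n) (hfu : ∀ n ≥ N, f n ≤ u n - u (n + 1)) : Summable f := by
  rw [← summable_nat_add_iff N]
  refine summable_of_sum_range_le (c := u N) (fun n => hf _) fun n => ?_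
  calc ∑ i ∈ Finset.range n, f (i + N)
      ≤ ∑ i ∈ Finset.range n, (u (i + N) - u (i + 1 + N)) :=
        Finset.sum_le_sum fun i _ => by
          simpa only [Nat.add_right_comm i 1 N] using hfu (i + N) (Nat.le_add_left N i)
    _ = u (0 + N) - u (n + N) := Finset.sum_range_sub' (fun i => u (i + N)) n
    _ ≤ u N := by rw [zero_add]; linarith [hu (n + N) (Nat.le_add_left N n)]

end Convergence

section StepToward

/-- The position after a walker at `s` has been offered the step `a`, which it takes exactly when
`a` points strictly towards the target `t`; the target may be overshot. -/
noncomputable def stepToward (a s t : ℝ) : ℝ :=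
  if 0 < a * (t - s) then s + a else s

variable {a s t : ℝ}

theorem stepToward_of_lt (h : s < t) : stepToward a s t = s + a⁺ := by
  simp only [stepToward, mul_pos_iff_of_pos_right (sub_pos.2 h)]
  split_ifs with ha
  · rw [posPart_of_nonneg ha.le]
  · rw [posPart_of_nonpos (not_lt.1 ha), add_zero]

theorem stepToward_of_gt (h : t < s) : stepToward a s t = s - a⁻ := by
  have hsign : 0 < a * (t - s) ↔ a < 0 := by
    rw [mul_comm]; exact smul_pos_iff_of_neg_left (sub_neg.2 h)
  simp only [stepToward, hsign]
  split_ifs with ha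
  · rw [negPart_of_nonpos ha.le, sub_neg_eq_add]
  · rw [negPart_of_nonneg (not_lt.1 ha), sub_zero]

theorem stepToward_self : stepToward a t t = t := by
  simp [stepToward]

theorem stepToward_lt_of_abs_lt (h : s < t) (hfar : |a| < |stepToward a s t - t|) :
    stepToward a s t < t := by
  rw [stepToward_of_lt h] at hfar ⊢
  by_contra! hle
  rw [abs_of_nonneg (sub_nonneg.2 hle)] at hfar
  linarith [posPart_add_negPart a, negPart_nonneg a]

theorem lt_stepToward_of_abs_lt (h : t < s) (hfar : |a| < |stepToward a s t - t|) :
    t < stepToward a s t := by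
  rw [stepToward_of_gt h] at hfar ⊢
  by_contra! hle
  rw [abs_of_nonpos (sub_nonpos.2 hle)] at hfar
  linarith [posPart_add_negPart a, posPart_nonneg a]

theorem stepToward_mem_uIcc_of_abs_lt (hfar : |a| < |stepToward a s t - t|) :
    stepToward a s t ∈ Set.uIcc s t := by
  rcases lt_trichotomy s t with h | rfl | h
  · refine Set.mem_uIcc_of_le ?_ (stepToward_lt_of_abs_lt h hfar).le
    linarith [stepToward_of_lt (a := a) h, posPart_nonneg a]
  · simp [stepToward_self]
  · refine Set.mem_uIcc_of_ge (lt_stepToward_of_abs_lt h hfar).le ?_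
    linarith [stepToward_of_gt (a := a) h, negPart_nonneg a]

theorem exists_abs_stepToward_sub_le {x S : ℕ → ℝ} {N : ℕ}
    (hpos : ¬ Summable fun n => (x n)⁺) (hneg : ¬ Summable fun n => (x n)⁻)
    (hS : ∀ n ≥ N, S (n + 1) = stepToward (x n) (S n) t) :
    ∃ n ≥ N, |stepToward (x n) (S n) t - t| ≤ |x n| := by
  by_contra! hfar
  rcases lt_trichotomy (S N) t with h | h | h
  · have hlt : ∀ n ≥ N, S n < t := fun n hn => by
      induction n, hn using Nat.le_induction with
      | base => exact h
      | succ n hn ih => exact hS n hn ▸ stepToward_lt_of_abs_lt ih (hfar n hn)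
    refine hpos (summable_of_le_sub_succ (u := fun n => t - S n) (fun n => posPart_nonneg _)
      (fun n hn => sub_nonneg.2 (hlt n hn).le) fun n hn => ?_)
    linarith [hS n hn, stepToward_of_lt (a := x n) (hlt n hn)]
  · have := hfar N le_rfl
    rw [h, stepToward_self, sub_self, abs_zero] at this
    exact (abs_nonneg _).not_gt this
  · have hgt : ∀ n ≥ N, t < S n := fun n hn => by
      induction n, hn using Nat.le_induction with
      | base => exact h
      | succ n hn ih => exact hS n hn ▸ lt_stepToward_of_abs_lt ih (hfar n hn)
    refine hneg (summable_of_le_sub_succ (u := fun n => S n - t) (fun n => negPart_nonneg _)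
      (fun n hn => sub_nonneg.2 (hgt n hn).le) fun n hn => ?_)
    linarith [hS n hn, stepToward_of_gt (a := x n) (hgt n hn)]

end StepToward

section Pursuit

/-- The greedy walk with steps drawn from `x` that pursues the targets `t 0, t 1, …` in turn: its
state at time `n` is the current position together with the index of the current target. A target
counts as reached when its distance from the walk is at most the size of the step just offered. -/
noncomputable def pursuit (x t : ℕ → ℝ) : ℕ → ℝ × ℕ
  | 0 => (0, 0)
  | n + 1 =>
    let (s, k) := pursuit x t n
    let s' := stepToward (x n) s (t k)
    (s', if |s' - t k| ≤ |x n| then k + 1 else k)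

/-- The position at time `n` of the walk `pursuit x t`. -/
noncomputable def pursuitPos (x t : ℕ → ℝ) (n : ℕ) : ℝ := (pursuit x t n).1

/-- The index of the target that `pursuit x t` pursues at time `n`. -/
noncomputable def pursuitIndex (x t : ℕ → ℝ) (n : ℕ) : ℕ := (pursuit x t n).2

/-- The walk `pursuit x t` reaches its current target in the step from time `n` to `n + 1`. -/
def PursuitReaches (x t : ℕ → ℝ) (n : ℕ) : Prop :=
  |pursuitPos x t (n + 1) - t (pursuitIndex x t n)| ≤ |x n|

/-- The `0`-`1`-sequence that records which of the terms of `x` the walk `pursuit x t` takes. -/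
noncomputable def pursuitSelection (x t : ℕ → ℝ) (n : ℕ) : Bool :=
  decide (0 < x n * (t (pursuitIndex x t n) - pursuitPos x t n))

variable {x t : ℕ → ℝ} {n : ℕ}

theorem pursuitPos_succ :
    pursuitPos x t (n + 1) = stepToward (x n) (pursuitPos x t n) (t (pursuitIndex x t n)) :=
  rfl

theorem pursuitIndex_succ_of_reaches (h : PursuitReaches x t n) :
    pursuitIndex x t (n + 1) = pursuitIndex x t n + 1 :=
  if_pos h

theorem pursuitIndex_succ_of_not_reaches (h : ¬ PursuitReaches x t n) :
    pursuitIndex x t (n + 1) = pursuitIndex x t n :=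
  if_neg h

theorem pursuitIndex_monotone (x t : ℕ → ℝ) : Monotone (pursuitIndex x t) :=
  monotone_nat_of_le_succ fun n => by
    by_cases h : PursuitReaches x t n
    · exact (Nat.le_succ _).trans_eq (pursuitIndex_succ_of_reaches h).symm
    · exact (pursuitIndex_succ_of_not_reaches h).ge

theorem sum_range_pursuitSelection (x t : ℕ → ℝ) (N : ℕ) :
    (∑ n ∈ Finset.range N, if pursuitSelection x t n then x n else 0) = pursuitPos x t N := by
  induction N with
  | zero => rfl
  | succ N ih =>
    rw [Finset.sum_range_succ, ih, pursuitPos_succ, stepToward]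
    simp only [pursuitSelection, decide_eq_true_eq]
    split_ifs
    exacts [rfl, add_zero _]

theorem exists_pursuitReaches_pursuitIndex (hpos : ¬ Summable fun n => (x n)⁺)
    (hneg : ¬ Summable fun n => (x n)⁻) (t : ℕ → ℝ) (N : ℕ) :
    ∃ n, pursuitIndex x t n = pursuitIndex x t N ∧ PursuitReaches x t n := by
  by_contra! h
  have hconst : ∀ n ≥ N, pursuitIndex x t n = pursuitIndex x t N := fun n hn => by
    induction n, hn using Nat.le_induction with
    | base => rfl
    | succ n _ ih => rw [pursuitIndex_succ_of_not_reaches (h n ih), ih]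
  obtain ⟨n, hn, hle⟩ := exists_abs_stepToward_sub_le (S := pursuitPos x t)
    (t := t (pursuitIndex x t N)) hpos hneg fun n hn => by rw [pursuitPos_succ, hconst n hn]
  refine h n (hconst n hn) ?_
  rwa [PursuitReaches, pursuitPos_succ, hconst n hn]

theorem exists_pursuitReaches_index (hpos : ¬ Summable fun n => (x n)⁺)
    (hneg : ¬ Summable fun n => (x n)⁻) (t : ℕ → ℝ) (k : ℕ) :
    ∃ n, pursuitIndex x t n = k ∧ PursuitReaches x t n := by
  induction k with
  | zero => exact exists_pursuitReaches_pursuitIndex hpos hneg t 0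
  | succ k ih =>
    obtain ⟨n, rfl, hn⟩ := ih
    rw [← pursuitIndex_succ_of_reaches hn]
    exact exists_pursuitReaches_pursuitIndex hpos hneg t (n + 1)

theorem abs_pursuitPos_succ_sub_le_of_reaches {l r : ℝ} (h : PursuitReaches x t n)
    (hx : |x n| ≤ r) (ht : |t (pursuitIndex x t n) - l| ≤ r) :
    |pursuitPos x t (n + 1) - l| ≤ 2 * r := by
  linarith [abs_sub_le (pursuitPos x t (n + 1)) (t (pursuitIndex x t n)) l, h.trans hx]

theorem abs_pursuitPos_succ_sub_le_of_not_reaches {l r : ℝ} (h : ¬ PursuitReaches x t n)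
    (hs : |pursuitPos x t n - l| ≤ r) (ht : |t (pursuitIndex x t n) - l| ≤ r) :
    |pursuitPos x t (n + 1) - l| ≤ r := by
  rw [← Real.dist_eq, ← Metric.mem_closedBall, Real.closedBall_eq_Icc] at hs ht ⊢
  exact Set.OrdConnected.uIcc_subset Set.ordConnected_Icc hs ht
    (stepToward_mem_uIcc_of_abs_lt (not_le.1 h))

theorem tendsto_pursuitPos {l : ℝ} (hx : Tendsto x atTop (𝓝 0))
    (hpos : ¬ Summable fun n => (x n)⁺) (hneg : ¬ Summable fun n => (x n)⁻)
    (ht : Tendsto t atTop (𝓝 l)) : Tendsto (pursuitPos x t) atTop (𝓝 l) := by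
  choose reachTime hindex hreach using exists_pursuitReaches_index hpos hneg t
  have hindex_atTop : Tendsto (pursuitIndex x t) atTop atTop :=
    tendsto_atTop_atTop_of_monotone (pursuitIndex_monotone x t) fun k =>
      ⟨reachTime k, (hindex k).ge⟩
  have hreach_atTop : Tendsto reachTime atTop atTop :=
    (Function.LeftInverse.injective hindex).nat_tendsto_atTop
  refine Metric.nhds_basis_closedBall.tendsto_right_iff.2 fun r hr => ?_
  simp only [Metric.mem_closedBall, Real.dist_eq]
  have hx_le : ∀ᶠ n in atTop, |x n| ≤ r / 2 := by
    simpa using hx.eventually (Metric.closedBall_mem_nhds 0 (half_pos hr))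
  have ht_le : ∀ᶠ n in atTop, |t (pursuitIndex x t n) - l| ≤ r / 2 :=
    (ht.comp hindex_atTop).eventually (Metric.closedBall_mem_nhds l (half_pos hr))
  obtain ⟨N, hN⟩ := eventually_atTop.1 (hx_le.and ht_le)
  obtain ⟨k, hk⟩ := (hreach_atTop.eventually_ge_atTop N).exists
  have hreaches_le : ∀ n ≥ N, PursuitReaches x t n → |pursuitPos x t (n + 1) - l| ≤ r :=
    fun n hn h => (abs_pursuitPos_succ_sub_le_of_reaches h (hN n hn).1 (hN n hn).2).trans_eq
      (mul_div_cancel₀ r two_ne_zero)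
  filter_upwards [eventually_ge_atTop (reachTime k + 1)] with n hn
  induction n, hn using Nat.le_induction with
  | base => exact hreaches_le _ hk (hreach k)
  | succ n hn ih =>
    have hNn : N ≤ n := by omega
    by_cases h : PursuitReaches x t n
    · exact hreaches_le n hNn h
    · exact abs_pursuitPos_succ_sub_le_of_not_reaches h ih
        ((hN n hNn).2.trans (half_le_self hr.le))

theorem tendsto_of_tendsto_pursuitPos {l : ℝ} (hx : Tendsto x atTop (𝓝 0))
    (hpos : ¬ Summable fun n => (x n)⁺) (hneg : ¬ Summable fun n => (x n)⁻)
    (h : Tendsto (pursuitPos x t) atTop (𝓝 l)) : Tendsto t atTop (𝓝 l) := by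
  choose reachTime hindex hreach using exists_pursuitReaches_index hpos hneg t
  have hreach_atTop : Tendsto reachTime atTop atTop :=
    (Function.LeftInverse.injective hindex).nat_tendsto_atTop
  have herror : Tendsto (fun k => pursuitPos x t (reachTime k + 1) - t k) atTop (𝓝 0) := by
    refine squeeze_zero_norm (fun k => ?_)
      (by simpa using (hx.comp hreach_atTop).abs : Tendsto (fun k => |x (reachTime k)|) _ _)
    simpa only [PursuitReaches, hindex, Real.norm_eq_abs] using hreach k
  simpa using (h.comp ((tendsto_add_atTop_nat 1).comp hreach_atTop)).sub herror

theorem isLocallyConstant_pursuit {X : Type*} [TopologicalSpace X] {t : X → ℕ → ℝ}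
    (ht : ∀ k, IsLocallyConstant fun v => t v k) (x : ℕ → ℝ) (n : ℕ) :
    IsLocallyConstant fun v => pursuit x (t v) n := by
  refine (IsLocallyConstant.iff_eventually_eq _).2 fun v => ?_
  induction n with
  | zero => exact Eventually.of_forall fun _ => rfl
  | succ n ih =>
    filter_upwards [ih, (ht (pursuit x (t v) n).2).eventually_eq v] with w hstate htarget
    simp only [pursuit, hstate, htarget]

theorem continuous_pursuitSelection {X : Type*} [TopologicalSpace X] {t : X → ℕ → ℝ}
    (ht : ∀ k, IsLocallyConstant fun v => t v k) (x : ℕ → ℝ) :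
    Continuous fun v => pursuitSelection x (t v) := by
  refine continuous_pi fun n => IsLocallyConstant.continuous ?_
  refine (IsLocallyConstant.iff_eventually_eq _).2 fun v => ?_
  filter_upwards [(isLocallyConstant_pursuit ht x n).eventually_eq v,
    (ht (pursuitIndex x (t v) n)).eventually_eq v] with w hstate htarget
  refine decide_eq_decide.2 ?_
  simp only [pursuitIndex, pursuitPos, hstate] at htarget ⊢
  rw [htarget]

end Pursuit

section AlternatingTarget

/-- The targets `1 / (v 0 + 1), -1 / (v 1 + 1), 1 / (v 2 + 1), …`. Their signs alternate so
that zero is the only limit they can have, and the `+ 1` keeps them nonzero where `v` vanishes. -/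
noncomputable def alternatingTarget (v : ℕ → ℕ) (k : ℕ) : ℝ :=
  (-1) ^ k * ((v k : ℝ) + 1)⁻¹

theorem isLocallyConstant_alternatingTarget (k : ℕ) :
    IsLocallyConstant fun v => alternatingTarget v k := by
  have hcoord : IsLocallyConstant fun v : ℕ → ℕ => v k :=
    (IsLocallyConstant.iff_continuous _).2 (continuous_apply k)
  exact hcoord.comp fun m => (-1) ^ k * ((m : ℝ) + 1)⁻¹

theorem eq_zero_of_tendsto_neg_one_pow_mul {a : ℕ → ℝ} {l : ℝ} (ha : ∀ k, 0 ≤ a k)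
    (h : Tendsto (fun k => (-1) ^ k * a k) atTop (𝓝 l)) : l = 0 := by
  have hprod := h.mul (h.comp (tendsto_add_atTop_nat 1))
  refine mul_self_eq_zero.1 (le_antisymm (le_of_tendsto' hprod fun k => ?_) (mul_self_nonneg l))
  have hsign : ((-1 : ℝ) ^ k) * (-1) ^ (k + 1) = -1 := by
    rw [pow_succ, ← mul_assoc, ← mul_pow]; simp
  calc (-1) ^ k * a k * ((-1) ^ (k + 1) * a (k + 1))
      = ((-1) ^ k * (-1) ^ (k + 1)) * (a k * a (k + 1)) := by ring
    _ ≤ 0 := by rw [hsign]; linarith [mul_nonneg (ha k) (ha (k + 1))]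

theorem tendsto_inv_natCast_add_one_zero_iff {α : Type*} {f : Filter α} {v : α → ℕ} :
    Tendsto (fun k => ((v k : ℝ) + 1)⁻¹) f (𝓝 0) ↔ Tendsto v f atTop := by
  rw [← tendsto_natCast_atTop_iff (R := ℝ)]
  refine ⟨fun h => ?_, fun h => tendsto_inv_atTop_zero.comp (tendsto_atTop_add_const_right _ 1 h)⟩
  have hpos : Tendsto (fun k => ((v k : ℝ) + 1)⁻¹) f (𝓝[>] 0) :=
    tendsto_nhdsWithin_iff.2 ⟨h, Eventually.of_forall fun k => Set.mem_Ioi.2 (by positivity)⟩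
  simpa [Function.comp_def] using
    tendsto_atTop_add_const_right f (-1) (tendsto_inv_nhdsGT_zero.comp hpos)

theorem exists_tendsto_alternatingTarget_iff {v : ℕ → ℕ} :
    (∃ l, Tendsto (alternatingTarget v) atTop (𝓝 l)) ↔ Tendsto v atTop atTop := by
  rw [← tendsto_inv_natCast_add_one_zero_iff]
  have habs : abs ∘ alternatingTarget v = fun k => ((v k : ℝ) + 1)⁻¹ := by
    ext k
    rw [Function.comp_apply, alternatingTarget, abs_mul, abs_neg_one_pow, one_mul,
      abs_of_nonneg (by positivity)]
  rw [← habs, ← tendsto_zero_iff_abs_tendsto_zero]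
  refine ⟨fun ⟨l, hl⟩ => ?_, fun h => ⟨0, h⟩⟩
  exact eq_zero_of_tendsto_neg_one_pow_mul (fun k => by positivity) hl ▸ hl

end AlternatingTarget

theorem stmt_12_general {x : ℕ → ℝ} (hx : Tendsto x atTop (𝓝 0))
    (hpos : ¬ Summable fun n => (x n)⁺) (hneg : ¬ Summable fun n => (x n)⁻) :
    (∃ F : ℕ → ℕ → Set (ℕ → Bool), (∀ i j, IsClosed (F i j)) ∧
      {ε : ℕ → Bool | ∃ s,
          Tendsto (fun N => ∑ n ∈ Finset.range N, if ε n then x n else 0) atTop (𝓝 s)}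
        = ⋂ i, ⋃ j, F i j) ∧
    (∃ ψ : (ℕ → ℕ) → (ℕ → Bool), Continuous ψ ∧ ∀ v : ℕ → ℕ,
      ((∃ s, Tendsto (fun N => ∑ n ∈ Finset.range N, if ψ v n then x n else 0)
          atTop (𝓝 s))
        ↔ Tendsto v atTop atTop)) := by
  have hcont (N : ℕ) :
      Continuous fun ε : ℕ → Bool => ∑ n ∈ Finset.range N, if ε n then x n else 0 :=
    continuous_finsetSum _ fun n _ =>
      (continuous_of_discreteTopology (f := fun b : Bool => if b then x n else 0)).comp
        (continuous_apply n)
  refine ⟨exists_isClosed_setOf_tendsto_eq_iInter_iUnion hcont,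
    fun v => pursuitSelection x (alternatingTarget v),
    continuous_pursuitSelection isLocallyConstant_alternatingTarget x, fun v => ?_⟩
  simp only [sum_range_pursuitSelection, ← exists_tendsto_alternatingTarget_iff]
  exact exists_congr fun l =>
    ⟨tendsto_of_tendsto_pursuitPos hx hpos hneg, tendsto_pursuitPos hx hpos hneg⟩

/-- For a conditionally convergent real series `∑ x_n`, the set
`E = {ε ∈ {0,1}^ℕ : ∑ ε_n x_n converges}` is an `F_{σδ}` subset of the Cantor space, and
there is a continuous `ψ : ℕ^ℕ → {0,1}^ℕ` with `ψ(v) ∈ E ↔ v(n) → ∞`. -/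
theorem stmt_12 (x : ℕ → ℝ)
    (hconv : ∃ s, Tendsto (fun N => ∑ n ∈ Finset.range N, x n) atTop (𝓝 s))
    (hnabs : ¬ Summable fun n => |x n|) :
    (∃ F : ℕ → ℕ → Set (ℕ → Bool), (∀ i j, IsClosed (F i j)) ∧
      {ε : ℕ → Bool | ∃ s,
          Tendsto (fun N => ∑ n ∈ Finset.range N, if ε n then x n else 0) atTop (𝓝 s)}
        = ⋂ i, ⋃ j, F i j) ∧
    (∃ ψ : (ℕ → ℕ) → (ℕ → Bool), Continuous ψ ∧ ∀ v : ℕ → ℕ,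
      ((∃ s, Tendsto (fun N => ∑ n ∈ Finset.range N, if ψ v n then x n else 0)
          atTop (𝓝 s))
        ↔ Tendsto v atTop atTop)) := by
  obtain ⟨s, hs⟩ := hconv
  exact stmt_12_general (tendsto_zero_of_tendsto_sum_range_s12 hs)
    (mt (summable_abs_of_summable_posPart hs) hnabs)
    (mt (summable_abs_of_summable_negPart hs) hnabs)
end

section
/- Let ∑ x_n be a conditionally convergent series in ℝ, and let ∑ y_n be an absolutely convergent series in ℝ such that the map ε ↦ ∑_n ε(n)·y(n) from {0,1}^ℕ to ℝ is injective. Then the achievement set A((x_n, y_n)_n) ⊆ ℝ² of the sequence of pairs is a Borel set which is neither a G_δ set nor an F_σ set. -/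
open Filter Topology

/-!
Attaching the sum of `∑ ε n • y n` to `(ε, ∑ ε n • x n)` is a closed embedding, since
`ε ↦ ∑ ε n • y n` is a continuous injection of a compact space; it carries the graph of the sum of
the convergent subseries of `∑ x n` onto the achievement set. So it suffices to study that graph.

As `x n → 0` while the positive and the negative terms have infinite sums, one can select
consecutive finite blocks of terms whose partial sums climb to a prescribed height `a k` and then
return to within `2⁻ᵏ` of zero. Keeping only the blocks `k` with `δ k = true` yields a series that
converges exactly when the heights of the kept blocks tend to `0`, and its sum would then be a
continuous function of `δ`. With `a k = 1` the graph pulls back to the set of eventually zero `δ`;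
with heights `1 / (j + 1)`, each occurring infinitely often, to the complement of that set. By
Baire's theorem the set of eventually zero `δ` is not `G_δ`, so neither the graph nor its complement
is.
-/

open Finset

/-- The terms of the subseries of `∑ x n` selected by `ε`, with zeros at the unselected indices. -/
def subseries {E : Type*} [Zero E] (x : ℕ → E) (ε : ℕ → Bool) : ℕ → E :=
  fun n => if ε n then x n else 0

/-- Selections together with the sums of the convergent subseries they select. -/
def subseriesGraph (x : ℕ → ℝ) : Set ((ℕ → Bool) × ℝ) :=
  {p | Tendsto (fun N => ∑ n ∈ range N, subseries x p.1 n) atTop (𝓝 p.2)}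

theorem continuous_subseries_apply {E : Type*} [Zero E] [TopologicalSpace E] (x : ℕ → E) (n : ℕ) :
    Continuous fun ε => subseries x ε n :=
  (continuous_of_discreteTopology (f := fun b : Bool => if b then x n else 0)).comp
    (continuous_apply n)

theorem norm_subseries_le {E : Type*} [NormedAddCommGroup E] (x : ℕ → E) (ε : ℕ → Bool) (n : ℕ) :
    ‖subseries x ε n‖ ≤ ‖x n‖ := by
  unfold subseries
  split_ifs <;> simp

theorem continuous_tsum_subseries {E : Type*} [NormedAddCommGroup E] [CompleteSpace E] {x : ℕ → E}
    (hx : Summable fun n => ‖x n‖) : Continuous fun ε => ∑' n, subseries x ε n :=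
  continuous_tsum (continuous_subseries_apply x) hx fun n ε => norm_subseries_le x ε n

theorem measurableSet_subseriesGraph (x : ℕ → ℝ) : MeasurableSet (subseriesGraph x) :=
  MeasureTheory.measurableSet_tendsto_fun
    (fun _ => ((continuous_finsetSum _ fun n _ => continuous_subseries_apply x n).comp
      continuous_fst).measurable) measurable_snd

theorem tendsto_zero_of_tendsto_sum {E : Type*} [AddCommGroup E] [TopologicalSpace E]
    [IsTopologicalAddGroup E] {x : ℕ → E}
    (hx : ∃ s, Tendsto (fun N => ∑ n ∈ range N, x n) atTop (𝓝 s)) : Tendsto x atTop (𝓝 0) := by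
  obtain ⟨s, hs⟩ := hx
  simpa [sum_range_succ] using ((tendsto_add_atTop_iff_nat 1).2 hs).sub hs

section ConditionallyConvergent

variable {x : ℕ → ℝ}

theorem not_summable_posPart
    (hx : ∃ s, Tendsto (fun N => ∑ n ∈ range N, x n) atTop (𝓝 s))
    (hxa : ¬ Summable fun n => |x n|) : ¬ Summable fun n => (x n)⁺ := by
  intro hpos
  obtain ⟨s, hs⟩ := hx
  have hneg : Summable fun n => (x n)⁻ := by
    refine ((hasSum_iff_tendsto_nat_of_nonneg (fun n => negPart_nonneg _) _).2
      ((hpos.hasSum.tendsto_sum_nat.sub hs).congr fun N => ?_)).summable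
    rw [← sum_sub_distrib]
    exact sum_congr rfl fun n _ => by linarith [posPart_sub_negPart (x n)]
  exact hxa ((hpos.add hneg).congr fun n => posPart_add_negPart (x n))

theorem not_summable_negPart
    (hx : ∃ s, Tendsto (fun N => ∑ n ∈ range N, x n) atTop (𝓝 s))
    (hxa : ¬ Summable fun n => |x n|) : ¬ Summable fun n => (x n)⁻ := by
  obtain ⟨s, hs⟩ := hx
  have hneg : ∃ t, Tendsto (fun N => ∑ n ∈ range N, -x n) atTop (𝓝 t) := ⟨-s, by simpa using hs.neg⟩
  simpa only [posPart_neg] using not_summable_posPart hneg (by simpa only [abs_neg] using hxa)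

end ConditionallyConvergent

/-- Over the window `[N, M)`, the partial sums of `f` leave `0` to a distance between `a` and
`a + e`, and are back within `e` of `0` at the end. -/
structure IsExcursion (f : ℕ → ℝ) (a e : ℝ) (N M : ℕ) : Prop where
  abs_sum_le : ∀ m ∈ Icc N M, |∑ n ∈ Ico N m, f n| ≤ a + e
  exists_le_abs_sum : ∃ m ∈ Icc N M, a ≤ |∑ n ∈ Ico N m, f n|
  abs_sum_Ico_le : |∑ n ∈ Ico N M, f n| ≤ e

namespace IsExcursion

variable {f g : ℕ → ℝ} {a e : ℝ} {N P M : ℕ}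

theorem congr (hf : IsExcursion f a e N M) (hfg : ∀ n ∈ Ico N M, f n = g n) :
    IsExcursion g a e N M := by
  have hsum : ∀ m ∈ Icc N M, ∑ n ∈ Ico N m, g n = ∑ n ∈ Ico N m, f n := fun m hm =>
    sum_congr rfl fun n hn => (hfg n (Ico_subset_Ico_right (mem_Icc.1 hm).2 hn)).symm
  obtain ⟨p, hp, hpa⟩ := hf.exists_le_abs_sum
  have hNM : N ≤ M := (mem_Icc.1 hp).1.trans (mem_Icc.1 hp).2
  exact ⟨fun m hm => hsum m hm ▸ hf.abs_sum_le m hm, ⟨p, hp, hsum p hp ▸ hpa⟩,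
    hsum M (right_mem_Icc.2 hNM) ▸ hf.abs_sum_Ico_le⟩

theorem zero (he : 0 ≤ e) (hNM : N ≤ M) : IsExcursion 0 0 e N M :=
  ⟨fun _ _ => by simpa, ⟨N, by simpa, by simp⟩, by simpa⟩

theorem of_climb_of_fall (hNP : N ≤ P) (hPM : P ≤ M) (ha : 0 ≤ a)
    (hclimb : ∀ n ∈ Ico N P, 0 ≤ f n) (hfall : ∀ n ∈ Ico P M, f n ≤ 0)
    (hpeak : ∑ n ∈ Ico N P, f n ∈ Set.Icc a (a + e)) (hnet : |∑ n ∈ Ico N M, f n| ≤ e) :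
    IsExcursion f a e N M := by
  refine ⟨fun m hm => ?_, ⟨P, mem_Icc.2 ⟨hNP, hPM⟩, hpeak.1.trans (le_abs_self _)⟩, hnet⟩
  obtain ⟨hNm, hmM⟩ := mem_Icc.1 hm
  rcases le_total m P with hmP | hPm
  · have hrest : 0 ≤ ∑ n ∈ Ico m P, f n :=
      sum_nonneg fun n hn => hclimb n (Ico_subset_Ico_left hNm hn)
    have hsum : 0 ≤ ∑ n ∈ Ico N m, f n :=
      sum_nonneg fun n hn => hclimb n (Ico_subset_Ico_right hmP hn)
    rw [abs_of_nonneg hsum]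
    linarith [sum_Ico_consecutive f hNm hmP, hpeak.2]
  · have hfallen : ∑ n ∈ Ico P m, f n ≤ 0 :=
      sum_nonpos fun n hn => hfall n (Ico_subset_Ico_right hmM hn)
    have hrest : ∑ n ∈ Ico m M, f n ≤ 0 :=
      sum_nonpos fun n hn => hfall n (Ico_subset_Ico_left hPm hn)
    rw [abs_le]
    constructor <;> linarith [sum_Ico_consecutive f hNP hPm, sum_Ico_consecutive f hNm hmM,
      hpeak.2, (abs_le.1 hnet).1]

end IsExcursion

theorem exists_blockIndex {N : ℕ → ℕ} (hN : StrictMono N) (hN0 : N 0 = 0) :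
    ∃ κ : ℕ → ℕ, ∀ n k, n ∈ Ico (N k) (N (k + 1)) ↔ κ n = k := by
  have hcover := iUnion_Ico_map_succ_eq_Ici (fun k => hN.monotone k.zero_le)
    (not_bddAbove_of_tendsto_atTop hN.tendsto_atTop)
  choose κ hκ using fun n => Set.mem_iUnion.1 (hcover.ge (hN0.trans_le (Nat.zero_le n)))
  refine ⟨κ, fun n k => ⟨fun hn => ?_, fun h => h ▸ mem_Ico.2 (hκ n)⟩⟩
  by_contra hne
  exact Set.disjoint_left.1 (hN.monotone.pairwise_disjoint_on_Ico_succ hne) (hκ n) (mem_Ico.1 hn)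

theorem tendsto_sum_iff_of_isExcursion {f a e : ℕ → ℝ} {N : ℕ → ℕ} (hN : StrictMono N)
    (hN0 : N 0 = 0) (he : Summable e)
    (hf : ∀ k, IsExcursion f (a k) (e k) (N k) (N (k + 1))) (ha : ∀ k, 0 ≤ a k) :
    Tendsto (fun m => ∑ n ∈ range m, f n) atTop (𝓝 (∑' k, ∑ n ∈ Ico (N k) (N (k + 1)), f n)) ↔
      Tendsto a atTop (𝓝 0) := by
  constructor
  · intro hconv
    choose p hp hap using fun k => (hf k).exists_le_abs_sum
    have hNp : ∀ k, N k ≤ p k := fun k => (mem_Icc.1 (hp k)).1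
    have hpeak : Tendsto p atTop atTop := tendsto_atTop_mono hNp hN.tendsto_atTop
    have hgap := ((hconv.comp hpeak).sub (hconv.comp hN.tendsto_atTop)).abs
    rw [sub_self, abs_zero] at hgap
    refine squeeze_zero ha (fun k => ?_) hgap
    simpa only [sum_Ico_eq_sub f (hNp k), Function.comp_apply] using hap k
  · intro ha0
    obtain ⟨κ, hκ⟩ := exists_blockIndex hN hN0
    have hmem : ∀ m, m ∈ Ico (N (κ m)) (N (κ m + 1)) := fun m => (hκ m _).2 rfl
    have hκ_top : Tendsto κ atTop atTop := tendsto_atTop.2 fun k => by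
      filter_upwards [eventually_ge_atTop (N k)] with m hm
      exact Nat.lt_succ_iff.1 (hN.lt_iff_lt.1 (hm.trans_lt (mem_Ico.1 (hmem m)).2))
    have hnet : Tendsto (fun k => ∑ n ∈ range (N k), f n) atTop
        (𝓝 (∑' k, ∑ n ∈ Ico (N k) (N (k + 1)), f n)) := by
      refine (Summable.of_norm_bounded he
        fun k => (hf k).abs_sum_Ico_le).hasSum.tendsto_sum_nat.congr fun k => ?_
      induction k with
      | zero => simp [hN0]
      | succ k ih =>
        rw [sum_range_succ, ih, sum_range_add_sum_Ico _ (hN.monotone k.le_succ)]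
    have hdev : Tendsto (fun m => ∑ n ∈ Ico (N (κ m)) m, f n) atTop (𝓝 0) := by
      refine squeeze_zero_norm (fun m => (hf (κ m)).abs_sum_le m ?_)
        (by simpa [Function.comp_def] using (ha0.add he.tendsto_atTop_zero).comp hκ_top)
      exact mem_Icc.2 ⟨(mem_Ico.1 (hmem m)).1, (mem_Ico.1 (hmem m)).2.le⟩
    simpa [sum_range_add_sum_Ico _ (mem_Ico.1 (hmem _)).1] using (hnet.comp hκ_top).add hdev

theorem exists_sum_Ico_mem_Icc {u : ℕ → ℝ} (hu : ∀ n, 0 ≤ u n) (hdiv : ¬ Summable u) {N : ℕ}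
    {e : ℝ} (he : ∀ n ≥ N, u n ≤ e) {a : ℝ} (ha : 0 ≤ a) :
    ∃ M ≥ N, ∑ n ∈ Ico N M, u n ∈ Set.Icc a (a + e) := by
  have hex : ∃ M, N ≤ M ∧ a ≤ ∑ n ∈ Ico N M, u n := by
    obtain ⟨M, hM, hNM⟩ := (((not_summable_iff_tendsto_nat_atTop_of_nonneg hu).1 hdiv
      |>.eventually_ge_atTop (a + ∑ n ∈ range N, u n)).and (eventually_ge_atTop N)).exists
    exact ⟨M, hNM, by rw [sum_Ico_eq_sub u hNM]; linarith⟩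
  classical
  obtain ⟨hNM, haM⟩ := Nat.find_spec hex
  refine ⟨Nat.find hex, hNM, haM, ?_⟩
  rcases hNM.eq_or_lt with hN | hN
  · rw [← hN, Ico_self, sum_empty]
    exact add_nonneg ha ((hu N).trans (he N le_rfl))
  · obtain ⟨k, hk⟩ := Nat.exists_eq_succ_of_ne_zero (Nat.ne_zero_of_lt hN)
    have hNk : N ≤ k := by omega
    have hbefore : ∑ n ∈ Ico N k, u n < a := by
      have := Nat.find_min hex (m := k) (by omega)
      exact not_le.1 fun h => this ⟨hNk, h⟩
    rw [hk, Nat.succ_eq_add_one, sum_Ico_succ_top hNk]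
    linarith [he k hNk]

section Rearrangeable

variable {x : ℕ → ℝ}

theorem exists_isExcursion_subseries (h0 : Tendsto x atTop (𝓝 0))
    (hpos : ¬ Summable fun n => (x n)⁺) (hneg : ¬ Summable fun n => (x n)⁻) {a e : ℝ}
    (ha : 0 ≤ a) (he : 0 < e) (N : ℕ) :
    ∃ M > N, ∃ σ, IsExcursion (subseries x σ) a e N M := by
  obtain ⟨K, hNK, hK⟩ : ∃ K > N, ∀ n ≥ K, |x n| ≤ e := by
    obtain ⟨K, hK⟩ := eventually_atTop.1 (h0.abs.eventually (gt_mem_nhds (by simpa using he)))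
    exact ⟨max K (N + 1), by omega, fun n hn => (hK n (le_of_max_le_left hn)).le⟩
  obtain ⟨P, hKP, hP⟩ := exists_sum_Ico_mem_Icc (fun n => posPart_nonneg (x n)) hpos
    (fun n hn => (sup_le (le_abs_self _) (abs_nonneg _)).trans (hK n hn)) ha
  obtain ⟨M, hPM, hM⟩ := exists_sum_Ico_mem_Icc (fun n => negPart_nonneg (x n)) hneg (N := P)
    (fun n hn => (sup_le (neg_le_abs _) (abs_nonneg _)).trans (hK n (hKP.trans hn))) (ha.trans hP.1)
  have hNP : N ≤ P := hNK.le.trans hKP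
  let σ : ℕ → Bool := fun n => if n < P then decide (K ≤ n ∧ 0 ≤ x n) else decide (x n ≤ 0)
  have hwait : ∀ n ∈ Ico N K, subseries x σ n = 0 := fun n hn => by
    obtain ⟨-, hnK⟩ := mem_Ico.1 hn
    simp [subseries, σ, hnK.trans_le hKP, hnK.not_ge]
  have hclimb : ∀ n ∈ Ico K P, subseries x σ n = (x n)⁺ := fun n hn => by
    obtain ⟨hKn, hnP⟩ := mem_Ico.1 hn
    simp [subseries, σ, hnP, hKn, posPart_eq_ite]
  have hfall : ∀ n ∈ Ico P M, subseries x σ n = -(x n)⁻ := fun n hn => by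
    by_cases hx : x n ≤ 0 <;> simp [subseries, σ, (mem_Ico.1 hn).1.not_gt, negPart_eq_ite, hx]
  have hpeak : ∑ n ∈ Ico N P, subseries x σ n = ∑ n ∈ Ico K P, (x n)⁺ := by
    rw [← sum_Ico_consecutive _ hNK.le hKP, sum_eq_zero hwait, zero_add, sum_congr rfl hclimb]
  refine ⟨M, by omega, σ, .of_climb_of_fall hNP hPM ha (fun n hn => ?_) (fun n hn => ?_)
    (hpeak ▸ hP) ?_⟩
  · rcases lt_or_ge n K with hnK | hKn
    · exact (hwait n (mem_Ico.2 ⟨(mem_Ico.1 hn).1, hnK⟩)).ge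
    · exact hclimb n (mem_Ico.2 ⟨hKn, (mem_Ico.1 hn).2⟩) ▸ posPart_nonneg _
  · exact hfall n hn ▸ neg_nonpos.2 (negPart_nonneg _)
  · rw [← sum_Ico_consecutive _ hNP hPM, hpeak, sum_congr rfl hfall, sum_neg_distrib, abs_le]
    constructor <;> linarith [hM.1, hM.2]

theorem exists_isExcursion_blocks (h0 : Tendsto x atTop (𝓝 0))
    (hpos : ¬ Summable fun n => (x n)⁺) (hneg : ¬ Summable fun n => (x n)⁻) {a e : ℕ → ℝ}
    (ha : ∀ k, 0 ≤ a k) (he : ∀ k, 0 < e k) :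
    ∃ (σ : ℕ → Bool) (N : ℕ → ℕ), StrictMono N ∧ N 0 = 0 ∧
      ∀ k, IsExcursion (subseries x σ) (a k) (e k) (N k) (N (k + 1)) := by
  choose next hnext τ hτ using fun k N => exists_isExcursion_subseries h0 hpos hneg (ha k) (he k) N
  let N : ℕ → ℕ := fun k => Nat.rec 0 next k
  have hN : StrictMono N := strictMono_nat_of_lt_succ fun k => hnext k (N k)
  obtain ⟨κ, hκ⟩ := exists_blockIndex hN rfl
  refine ⟨fun n => τ (κ n) (N (κ n)) n, N, hN, rfl, fun k => (hτ k (N k)).congr fun n hn => ?_⟩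
  simp only [subseries, (hκ n k).1 hn]

/-- `Φ δ` runs through the `k`-th of a fixed sequence of excursions of heights `a k` exactly when
`δ k = true`. -/
theorem exists_continuous_mem_subseriesGraph_iff (h0 : Tendsto x atTop (𝓝 0))
    (hpos : ¬ Summable fun n => (x n)⁺) (hneg : ¬ Summable fun n => (x n)⁻) {a : ℕ → ℝ}
    (ha : ∀ k, 0 ≤ a k) :
    ∃ Φ : (ℕ → Bool) → (ℕ → Bool) × ℝ, Continuous Φ ∧
      ∀ δ, Φ δ ∈ subseriesGraph x ↔ Tendsto (subseries a δ) atTop (𝓝 0) := by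
  obtain ⟨σ, N, hN, hN0, hσ⟩ := exists_isExcursion_blocks h0 hpos hneg ha
    (e := fun k => (1 / 2) ^ k) (fun k => by positivity)
  obtain ⟨κ, hκ⟩ := exists_blockIndex hN hN0
  let net : ℕ → ℝ := fun k => ∑ n ∈ Ico (N k) (N (k + 1)), subseries x σ n
  have hnet : Summable fun k => ‖net k‖ :=
    summable_geometric_two.of_nonneg_of_le (fun _ => norm_nonneg _) fun k => (hσ k).abs_sum_Ico_le
  let sel : (ℕ → Bool) → ℕ → Bool := fun δ n => δ (κ n) && σ n
  have hsel : ∀ δ k, ∀ n ∈ Ico (N k) (N (k + 1)),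
      subseries x (sel δ) n = if δ k then subseries x σ n else 0 := fun δ k n hn => by
    cases hδ : δ k <;> simp [subseries, sel, (hκ n k).1 hn, hδ]
  have hexc : ∀ δ k, IsExcursion (subseries x (sel δ)) (subseries a δ k) ((1 / 2) ^ k)
      (N k) (N (k + 1)) := fun δ k => by
    cases hδ : δ k
    · simpa [subseries, hδ] using (IsExcursion.zero (by positivity) (hN.monotone k.le_succ)).congr
        fun n hn => by simp [hsel δ k n hn, hδ]
    · simpa [subseries, hδ] using (hσ k).congr fun n hn => by simp [hsel δ k n hn, hδ]
  have hnet_eq : ∀ δ k, ∑ n ∈ Ico (N k) (N (k + 1)), subseries x (sel δ) n = subseries net δ k :=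
    fun δ k => by
      rw [sum_congr rfl (hsel δ k)]
      cases hδ : δ k <;> simp [subseries, net, hδ]
  refine ⟨fun δ => (sel δ, ∑' k, subseries net δ k),
    .prodMk (continuous_pi fun n => ?_) (continuous_tsum_subseries hnet), fun δ => ?_⟩
  · exact (continuous_of_discreteTopology (f := fun b : Bool => b && σ n)).comp
      (continuous_apply (κ n))
  · simp only [← hnet_eq]
    refine tendsto_sum_iff_of_isExcursion hN hN0 summable_geometric_two (hexc δ) fun k => ?_
    unfold subseries
    split_ifs
    exacts [ha k, le_rfl]

end Rearrangeable

theorem dense_setOf_eventuallyEq {X : Type*} [TopologicalSpace X] (τ : ℕ → X) :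
    Dense {δ : ℕ → X | δ =ᶠ[atTop] τ} := by
  intro δ
  refine mem_closure_of_tendsto (b := atTop) (f := fun N k => if k < N then δ k else τ k)
    (tendsto_pi_nhds.2 fun k => tendsto_const_nhds.congr' ?_) (Eventually.of_forall fun N => ?_)
  · filter_upwards [eventually_gt_atTop k] with N hN using (if_pos hN).symm
  · filter_upwards [eventually_ge_atTop N] with k hk using if_neg hk.not_gt

theorem not_isGδ_setOf_eventually_eq_false :
    ¬ IsGδ {δ : ℕ → Bool | ∀ᶠ k in atTop, δ k = false} := by
  intro hG
  have hflip : Continuous fun (δ : ℕ → Bool) k => !δ k := continuous_pi fun k =>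
    (continuous_of_discreteTopology (f := not)).comp (continuous_apply k)
  have hdense := (dense_setOf_eventuallyEq fun _ => false).inter_of_Gδ hG (hG.preimage hflip)
    (by simpa [EventuallyEq] using dense_setOf_eventuallyEq fun _ => true)
  obtain ⟨δ, hδ, hδ'⟩ := hdense.nonempty
  obtain ⟨k, hk, hk'⟩ := (hδ.and hδ').exists
  simp_all

/-- Numbers `i` coding the pairs `(j, k)` such that `δ` vanishes on `[j, k)`. Each `j` occurs with
infinitely many `k` exactly when `δ` vanishes on `[j, ∞)`. -/
def zeroStretch (δ : ℕ → Bool) (i : ℕ) : Bool :=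
  decide (∀ l : Ico i.unpair.1 i.unpair.2, δ l = false)

theorem continuous_zeroStretch : Continuous zeroStretch :=
  continuous_pi fun i => (continuous_of_discreteTopology
    (f := fun δ : Ico i.unpair.1 i.unpair.2 → Bool => decide (∀ l, δ l = false))).comp
    (continuous_pi fun l => continuous_apply l.1)

theorem zeroStretch_pair_eq_true_iff {δ : ℕ → Bool} {j k : ℕ} :
    zeroStretch δ (j.pair k) = true ↔ ∀ l ∈ Ico j k, δ l = false := by
  simp [zeroStretch]

theorem tendsto_subseries_zeroStretch_iff {E : Type*} [NormedAddCommGroup E] {a : ℕ → E}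
    (ha : ∀ j, a j ≠ 0) (ha0 : Tendsto a atTop (𝓝 0)) (δ : ℕ → Bool) :
    Tendsto (subseries (fun i => a i.unpair.1) (zeroStretch δ)) atTop (𝓝 0) ↔
      ∃ᶠ k in atTop, δ k = true := by
  have hpair : ∀ j, StrictMono (Nat.pair j) := fun j _ _ => Nat.pair_lt_pair_right j
  constructor
  · intro h hδ
    obtain ⟨j, hj⟩ := eventually_atTop.1 hδ
    have hsel : ∀ k, zeroStretch δ (j.pair k) = true := fun k =>
      zeroStretch_pair_eq_true_iff.2 fun l hl => by simpa using hj l (mem_Ico.1 hl).1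
    have hconst := h.comp (hpair j).tendsto_atTop
    simp only [Function.comp_def, subseries, hsel, if_true, Nat.unpair_pair,
      tendsto_const_nhds_iff] at hconst
    exact ha j hconst
  · intro h
    choose next hnext hδ using frequently_atTop.1 h
    refine NormedAddGroup.tendsto_nhds_zero.2 fun ε hε => ?_
    obtain ⟨J, hJ⟩ := eventually_atTop.1 (NormedAddGroup.tendsto_nhds_zero.1 ha0 ε hε)
    have hlate : ∀ᶠ i in atTop, ∀ j ∈ range J, j.pair (next j) < i :=
      (eventually_all_finset _).2 fun j _ => eventually_gt_atTop _
    filter_upwards [hlate] with i hi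
    obtain ⟨⟨j, k⟩, rfl⟩ := Nat.pairEquiv.surjective i
    rcases le_or_gt J j with hJj | hjJ
    · refine (norm_subseries_le _ _ _).trans_lt ?_
      simpa using hJ j hJj
    · have hk : next j < k := (hpair j).lt_iff_lt.1 (hi j (mem_range.2 hjJ))
      have hunselected : zeroStretch δ (j.pair k) = false := Bool.eq_false_iff.2 fun hsel => by
        have := zeroStretch_pair_eq_true_iff.1 hsel (next j) (mem_Ico.2 ⟨hnext j, hk⟩)
        simp [hδ] at this
      simpa [subseries, hunselected] using hε

section Rearrangeable

variable {x : ℕ → ℝ}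

theorem not_isGδ_subseriesGraph (h0 : Tendsto x atTop (𝓝 0))
    (hpos : ¬ Summable fun n => (x n)⁺) (hneg : ¬ Summable fun n => (x n)⁻) :
    ¬ IsGδ (subseriesGraph x) := by
  intro hG
  obtain ⟨Φ, hΦ, hmem⟩ := exists_continuous_mem_subseriesGraph_iff h0 hpos hneg (a := fun _ => 1)
    fun _ => zero_le_one
  refine not_isGδ_setOf_eventually_eq_false ?_
  convert hG.preimage hΦ using 1
  ext δ
  refine ⟨fun hδ => (hmem δ).2 (tendsto_const_nhds.congr' ?_), fun hδ => ?_⟩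
  · filter_upwards [hδ] with k hk
    simp [subseries, hk]
  · filter_upwards [((hmem δ).1 hδ).eventually (gt_mem_nhds one_pos)] with k hk
    simpa [subseries, apply_ite (· < (1 : ℝ))] using hk

theorem not_isGδ_compl_subseriesGraph (h0 : Tendsto x atTop (𝓝 0))
    (hpos : ¬ Summable fun n => (x n)⁺) (hneg : ¬ Summable fun n => (x n)⁻) :
    ¬ IsGδ (subseriesGraph x)ᶜ := by
  intro hG
  obtain ⟨Φ, hΦ, hmem⟩ := exists_continuous_mem_subseriesGraph_iff h0 hpos hneg
    (a := fun i => 1 / ((i.unpair.1 : ℝ) + 1)) fun i => by positivity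
  have hinf : ∀ δ, Φ (zeroStretch δ) ∈ subseriesGraph x ↔ ∃ᶠ k in atTop, δ k = true := fun δ =>
    (hmem _).trans (tendsto_subseries_zeroStretch_iff (a := fun j => 1 / ((j : ℝ) + 1))
      (fun j => by positivity) tendsto_one_div_add_atTop_nhds_zero_nat δ)
  refine not_isGδ_setOf_eventually_eq_false ?_
  convert hG.preimage (hΦ.comp continuous_zeroStretch) using 1
  ext δ
  simp [hinf]

end Rearrangeable

section Pairs

variable {E : Type*} [NormedAddCommGroup E]

/-- Together with the sum of a subseries of `∑ x n`, the sum of the subseries of the absolutely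
convergent `∑ y n` with the same selection. -/
noncomputable def pairSum (y : ℕ → E) (p : (ℕ → Bool) × ℝ) : ℝ × E :=
  (p.2, ∑' n, subseries y p.1 n)

variable [CompleteSpace E] {y : ℕ → E}

theorem isClosedEmbedding_pairSum (hy : Summable fun n => ‖y n‖)
    (hinj : Function.Injective fun ε : ℕ → Bool => ∑' n, subseries y ε n) :
    IsClosedEmbedding (pairSum y) :=
  (IsClosedEmbedding.id.prodMap ((continuous_tsum_subseries hy).isClosedEmbedding hinj)).comp
    (Homeomorph.prodComm _ _).isClosedEmbedding

theorem achv_eq_image_pairSum (x : ℕ → ℝ) (hy : Summable fun n => ‖y n‖) :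
    achv (fun n => (x n, y n)) = pairSum y '' subseriesGraph x := by
  have hysum : ∀ ε : ℕ → Bool, Tendsto (fun N => ∑ n ∈ range N, subseries y ε n) atTop
      (𝓝 (∑' n, subseries y ε n)) := fun ε =>
    (Summable.of_norm_bounded hy (norm_subseries_le y ε)).hasSum.tendsto_sum_nat
  have hpair : ∀ (ε : ℕ → Bool) N, (∑ n ∈ range N, if ε n then (x n, y n) else 0) =
      (∑ n ∈ range N, subseries x ε n, ∑ n ∈ range N, subseries y ε n) := fun ε N => by
    simp only [subseries, prod_mk_sum]
    exact sum_congr rfl fun n _ => by split_ifs <;> rfl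
  ext ⟨s, t⟩
  simp only [achv, Set.mem_ofPred_eq, hpair, Prod.tendsto_iff, Set.mem_image]
  constructor
  · rintro ⟨ε, hs, ht⟩
    exact ⟨(ε, s), hs, Prod.ext rfl (tendsto_nhds_unique (hysum ε) ht)⟩
  · rintro ⟨⟨ε, s'⟩, hs, hst⟩
    obtain ⟨rfl, rfl⟩ := Prod.mk.inj hst
    exact ⟨ε, hs, hysum ε⟩

end Pairs

theorem stmt_13_general {E : Type*} [NormedAddCommGroup E] [CompleteSpace E] [MeasurableSpace E]
    [BorelSpace E] (x : ℕ → ℝ) (y : ℕ → E) (hx0 : Tendsto x atTop (𝓝 0))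
    (hx_pos : ¬ Summable fun n => (x n)⁺) (hx_neg : ¬ Summable fun n => (x n)⁻)
    (hy : Summable fun n => ‖y n‖)
    (hinj : Function.Injective fun ε : ℕ → Bool => ∑' n, if ε n then y n else 0) :
    MeasurableSet (achv fun n => (x n, y n)) ∧
    ¬ IsGδ (achv fun n => (x n, y n)) ∧
    ¬ ∃ F : ℕ → Set (ℝ × E), (∀ n, IsClosed (F n)) ∧ achv (fun n => (x n, y n)) = ⋃ n, F n := by
  have hemb := isClosedEmbedding_pairSum hy hinj
  have himage := achv_eq_image_pairSum x hy
  have hpreimage : pairSum y ⁻¹' achv (fun n => (x n, y n)) = subseriesGraph x := by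
    rw [himage, Set.preimage_image_eq _ hemb.injective]
  refine ⟨?_, fun hG => ?_, ?_⟩
  · rw [himage]
    exact hemb.measurableEmbedding.measurableSet_image.2 (measurableSet_subseriesGraph x)
  · exact not_isGδ_subseriesGraph hx0 hx_pos hx_neg (hpreimage ▸ hG.preimage hemb.continuous)
  · rintro ⟨F, hF, hU⟩
    have hcompl : IsGδ (achv fun n => (x n, y n))ᶜ := by
      rw [hU, Set.compl_iUnion]
      exact .iInter_of_isOpen fun n => (hF n).isOpen_compl
    refine not_isGδ_compl_subseriesGraph hx0 hx_pos hx_neg ?_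
    rw [← hpreimage, ← Set.preimage_compl]
    exact hcompl.preimage hemb.continuous

/-- If `∑ x_n` is conditionally convergent in `ℝ` and `∑ y_n` is absolutely
convergent in `ℝ` with `ε ↦ ∑ ε_n y_n` injective on `{0,1}^ℕ`, then the achievement set of
the sequence of pairs `(x_n, y_n)` is a Borel subset of `ℝ²` which is neither `G_δ` nor
`F_σ`. -/
theorem stmt_13 (x y : ℕ → ℝ)
    (hx_conv : ∃ s, Tendsto (fun N => ∑ n ∈ Finset.range N, x n) atTop (𝓝 s))
    (hx_nabs : ¬ Summable fun n => |x n|)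
    (hy : Summable fun n => |y n|)
    (hinj : Function.Injective fun ε : ℕ → Bool => ∑' n, if ε n then y n else 0) :
    MeasurableSet (achv fun n => ((x n, y n) : ℝ × ℝ)) ∧
    ¬ IsGδ (achv fun n => ((x n, y n) : ℝ × ℝ)) ∧
    ¬ ∃ F : ℕ → Set (ℝ × ℝ), (∀ n, IsClosed (F n)) ∧
        achv (fun n => ((x n, y n) : ℝ × ℝ)) = ⋃ n, F n :=
  stmt_13_general x y (tendsto_zero_of_tendsto_sum hx_conv) (not_summable_posPart hx_conv hx_nabs)
    (not_summable_negPart hx_conv hx_nabs) hy hinj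
end

section
/- Let x : ℕ → ℝ^k be such that ∑ x_n is conditionally convergent and the achievement set A(x) is dense in ℝ^k, and let y : ℕ → ℝ^m be such that ∑ y_n is absolutely convergent. Then closure(A((x_n, y_n)_n)) = ℝ^k × A(y), where (x_n, y_n) denotes the sequence of pairs in ℝ^k × ℝ^m. -/
open Filter Topology

/-!
Call `v` a tail limit of `x` if it is approximated by finite sums of arbitrarily late terms. The
tail limits of a convergent series form a closed subgroup; let `V` be the largest linear subspace
in it. If `V ≠ E`, pass to `E ⧸ V`: there the finite subsums are still dense, hence unbounded,
while the terms tend to zero, so adding late terms one at a time crosses every thin shell around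
the origin. By compactness the tail limits accumulate at `0`, and a tangent direction at `0` to a
closed subgroup spans a line inside it. This line lifts to the tail limits of `x`, contradicting
the choice of `V`. So every vector is a tail limit of `x`. Since late terms of `y` have small
sums, the closure of `A(x, y)` is invariant under translations by `E × {0}`; and `A(y)` is
compact, being a continuous image of the Cantor space.
-/

section TailLimits

variable {ι E F : Type*}

/-- The sums of `x` over the finite sets of indices disjoint from `s`. -/
def tailSums [AddCommMonoid E] (x : ι → E) (s : Finset ι) : Set E :=
  (fun G : Finset ι => ∑ n ∈ G, x n) '' {G | Disjoint G s}

/-- The vectors approximated by finite subsums of `x` avoiding any prescribed finite set of indices.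
They are the vectors by which a finite subsum can be moved, approximately, by adding late terms. -/
def tailLimits [AddCommMonoid E] [TopologicalSpace E] (x : ι → E) : Set E :=
  ⋂ s : Finset ι, closure (tailSums x s)

section AddCommMonoid

variable [AddCommMonoid E] [AddCommMonoid F] {x : ι → E} {s t : Finset ι}

theorem tailSums_anti (hst : s ⊆ t) : tailSums x t ⊆ tailSums x s :=
  Set.image_mono fun _ hG => hG.mono_right hst

theorem image_tailSums (f : E →+ F) (x : ι → E) (s : Finset ι) :
    f '' tailSums x s = tailSums (f ∘ x) s := by
  simp only [tailSums, Set.image_image, map_sum, Function.comp_apply]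

theorem zero_mem_tailSums : (0 : E) ∈ tailSums x s :=
  ⟨∅, Finset.disjoint_empty_left s, Finset.sum_empty⟩

variable [TopologicalSpace E] {u v : E}

theorem isClosed_tailLimits : IsClosed (tailLimits x) :=
  isClosed_iInter fun _ => isClosed_closure

theorem zero_mem_tailLimits : (0 : E) ∈ tailLimits x :=
  Set.mem_iInter.2 fun _ => subset_closure zero_mem_tailSums

theorem add_mem_closure_tailSums [ContinuousAdd E] (hu : u ∈ closure (tailSums x s))
    (hv : v ∈ tailLimits x) : u + v ∈ closure (tailSums x s) := by
  classical
  rw [← closure_closure]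
  refine map_mem_closure (f := (· + v)) (continuous_add_const v) hu ?_
  rintro _ ⟨G, hG, rfl⟩
  refine map_mem_closure (continuous_const_add _) (Set.mem_iInter.1 hv (s ∪ G)) ?_
  rintro _ ⟨H, hH, rfl⟩
  obtain ⟨hHs, hHG⟩ := Finset.disjoint_union_right.1 hH
  exact ⟨G ∪ H, Finset.disjoint_union_left.2 ⟨hG, hHs⟩, Finset.sum_union hHG.symm⟩

theorem add_mem_tailLimits [ContinuousAdd E] (hu : u ∈ tailLimits x) (hv : v ∈ tailLimits x) :
    u + v ∈ tailLimits x :=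
  Set.mem_iInter.2 fun s => add_mem_closure_tailSums (Set.mem_iInter.1 hu s) hv

theorem closure_achv (z : ℕ → E) : closure (achv z) = closure (tailSums z ∅) := by
  refine (closure_minimal ?_ isClosed_closure).antisymm (closure_mono ?_)
  · rintro a ⟨ε, hε⟩
    refine mem_closure_of_tendsto hε (Eventually.of_forall fun N => ?_)
    exact ⟨{n ∈ Finset.range N | ε n}, Finset.disjoint_empty_right _, Finset.sum_filter ..⟩
  · rintro _ ⟨G, -, rfl⟩
    refine ⟨fun n => decide (n ∈ G), tendsto_const_nhds.congr' ?_⟩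
    filter_upwards [tendsto_finset_range.eventually_ge_atTop G] with N hN
    simp only [decide_eq_true_eq, Finset.sum_ite_mem, Finset.inter_eq_right.2 hN]

theorem map_mem_achv [TopologicalSpace F] {f : E →+ F} (hf : Continuous f) {z : ℕ → E}
    (hu : u ∈ achv z) : f u ∈ achv (f ∘ z) := by
  obtain ⟨ε, hε⟩ := hu
  refine ⟨ε, ((hf.tendsto u).comp hε).congr fun N => ?_⟩
  simp only [Function.comp_apply, map_sum, apply_ite f, map_zero]

end AddCommMonoid

section AddCommGroup

variable [AddCommGroup E] [TopologicalSpace E] [AddCommGroup F] [TopologicalSpace F]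

-- If the series converges to `a`, then `g ↦ a - ∑_{n < N} x n - g` maps the tail sums over
-- finite `G ⊆ [N, ∞)` to limits of the tail sums over `[N, M) \ G`.
theorem neg_mem_tailLimits [IsTopologicalAddGroup E] {x : ℕ → E}
    (hx : ∃ a, Tendsto (fun N => ∑ n ∈ Finset.range N, x n) atTop (𝓝 a)) {u : E}
    (hu : u ∈ tailLimits x) : -u ∈ tailLimits x := by
  obtain ⟨a, ha⟩ := hx
  refine Set.mem_iInter.2 fun s => ?_
  have hlim : Tendsto (fun N => a - ∑ n ∈ Finset.range N, x n - u) atTop (𝓝 (-u)) := by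
    simpa using (ha.const_sub a).sub_const u
  refine isClosed_closure.mem_of_tendsto hlim ?_
  filter_upwards [tendsto_finset_range.eventually_ge_atTop s] with N hN
  rw [← closure_closure]
  refine map_mem_closure (continuous_sub_left _) (Set.mem_iInter.1 hu (Finset.range N)) ?_
  rintro _ ⟨G, hG, rfl⟩
  refine mem_closure_of_tendsto ((ha.sub_const _).sub_const _) ?_
  filter_upwards [tendsto_finset_range.eventually_ge_atTop (Finset.range N ∪ G)] with M hM
  refine ⟨Finset.range M \ (Finset.range N ∪ G), ?_, ?_⟩
  · exact Finset.sdiff_disjoint.mono_right (hN.trans Finset.subset_union_left)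
  · dsimp only
    rw [Finset.sum_sdiff_eq_sub hM, Finset.sum_union hG.symm, sub_sub]

/-- The tail limits of a convergent series, as a subgroup. -/
def tailLimitsSubgroup [IsTopologicalAddGroup E] (x : ℕ → E)
    (hx : ∃ a, Tendsto (fun N => ∑ n ∈ Finset.range N, x n) atTop (𝓝 a)) : AddSubgroup E where
  carrier := tailLimits x
  zero_mem' := zero_mem_tailLimits
  add_mem' := add_mem_tailLimits
  neg_mem' := neg_mem_tailLimits hx

theorem mem_tailLimits_of_map_mem [ContinuousAdd E] {x : ι → E} {f : E →+ F}
    (hf : IsQuotientMap f) (hker : (f.ker : Set E) ⊆ tailLimits x) {v : E}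
    (hv : f v ∈ tailLimits (f ∘ x)) : v ∈ tailLimits x := by
  refine Set.mem_iInter.2 fun s => ?_
  set C := closure (tailSums x s)
  have hsat {a b : E} (ha : a ∈ C) (hab : f a = f b) : b ∈ C := by
    have hba : b - a ∈ f.ker := by rw [AddMonoidHom.mem_ker, map_sub, hab, sub_self]
    simpa using add_mem_closure_tailSums ha (hker hba)
  have hpre : f ⁻¹' (f '' C) = C :=
    Set.Subset.antisymm (fun _ ⟨_, ha, hab⟩ => hsat ha hab) (Set.subset_preimage_image f C)
  have hclosed : IsClosed (f '' C) := hf.isClosed_preimage.1 (hpre.symm ▸ isClosed_closure)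
  have hsub : closure (tailSums (f ∘ x) s) ⊆ f '' C :=
    closure_minimal (image_tailSums f x s ▸ Set.image_mono subset_closure) hclosed
  obtain ⟨a, ha, hav⟩ := hsub (Set.mem_iInter.1 hv s)
  exact hsat ha hav

end AddCommGroup

theorem prodMk_zero_mem_tailLimits [AddCommMonoid E] [TopologicalSpace E] [AddCommGroup F]
    [TopologicalSpace F] [IsTopologicalAddGroup F] {x : ι → E} {y : ι → F} (hy : Summable y) {v : E}
    (hv : v ∈ tailLimits x) : (v, (0 : F)) ∈ tailLimits fun n => (x n, y n) := by
  classical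
  refine Set.mem_iInter.2 fun s => mem_closure_iff_nhds.2 fun U hU => ?_
  obtain ⟨V, hV, W, hW, hVW⟩ := mem_nhds_prod_iff.1 hU
  obtain ⟨t, ht⟩ := hy.vanishing hW
  obtain ⟨_, hGV, G, hG, rfl⟩ := mem_closure_iff_nhds.1 (Set.mem_iInter.1 hv (s ∪ t)) V hV
  obtain ⟨hGs, hGt⟩ := Finset.disjoint_union_right.1 hG
  refine ⟨(∑ n ∈ G, x n, ∑ n ∈ G, y n), hVW ⟨hGV, ht G hGt⟩, G, hGs, ?_⟩
  ext <;> simp only [Prod.fst_sum, Prod.snd_sum]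

end TailLimits

section Lines

variable {E : Type*}

/-- The largest linear subspace contained in a subgroup of a real vector space. -/
def linealitySpace [AddCommGroup E] [Module ℝ E] (S : AddSubgroup E) : Submodule ℝ E where
  carrier := {v | ∀ t : ℝ, t • v ∈ S}
  zero_mem' t := by simp only [smul_zero, S.zero_mem]
  add_mem' hu hv t := by simpa only [smul_add] using S.add_mem (hu t) (hv t)
  smul_mem' c v hv t := by simpa only [smul_smul] using hv (t * c)

theorem linealitySpace_subset [AddCommGroup E] [Module ℝ E] (S : AddSubgroup E) :
    (linealitySpace S : Set E) ⊆ S :=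
  fun v hv => one_smul ℝ v ▸ hv 1

theorem tangentConeAt_zero_subset_linealitySpace [NormedAddCommGroup E] [NormedSpace ℝ E]
    (S : AddSubgroup E) (hS : IsClosed (S : Set E)) :
    tangentConeAt ℝ (S : Set E) 0 ⊆ linealitySpace S := by
  intro w hw t
  obtain ⟨c, d, hd, hdS, hcd⟩ := mem_tangentConeAt_iff_exists_seq.1 hw
  have hfract : Tendsto (fun n => Int.fract (t * c n) • d n) atTop (𝓝 0) := by
    refine squeeze_zero_norm (fun n => ?_) (tendsto_zero_iff_norm_tendsto_zero.1 hd)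
    rw [norm_smul, Real.norm_of_nonneg (Int.fract_nonneg _)]
    exact mul_le_of_le_one_left (norm_nonneg _) (Int.fract_lt_one _).le
  have hfloor : Tendsto (fun n => ⌊t * c n⌋ • d n) atTop (𝓝 (t • w)) := by
    have h := (hcd.const_smul t).sub hfract
    simpa only [smul_smul, ← sub_smul, Int.self_sub_fract, Int.cast_smul_eq_zsmul,
      sub_zero] using h
  refine hS.mem_of_tendsto hfloor (hdS.mono fun n hn => S.zsmul_mem ?_ _)
  rwa [zero_add] at hn

end Lines

section Unbounded

variable {ι E : Type*}

theorem exists_subset_norm_sum_mem_Icc [SeminormedAddCommGroup E] {x : ι → E} {r : ℝ} (hr : 0 ≤ r)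
    {G : Finset ι} (hx : ∀ n ∈ G, ‖x n‖ ≤ r) (hG : r ≤ ‖∑ n ∈ G, x n‖) :
    ∃ H ⊆ G, ‖∑ n ∈ H, x n‖ ∈ Set.Icc r (2 * r) := by
  classical
  induction G using Finset.induction_on with
  | empty => exact ⟨∅, subset_rfl, hG, by simpa using hr⟩
  | insert a G ha ih =>
    obtain ⟨hxa, hxG⟩ := (Finset.forall_mem_insert _ _ _).1 hx
    rcases le_or_gt r ‖∑ n ∈ G, x n‖ with h | h
    · obtain ⟨H, hHG, hH⟩ := ih hxG h
      exact ⟨H, hHG.trans (Finset.subset_insert a G), hH⟩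
    · refine ⟨insert a G, subset_rfl, hG, ?_⟩
      rw [Finset.sum_insert ha]
      linarith [norm_add_le (x a) (∑ n ∈ G, x n)]

theorem exists_mem_tailSums_norm_mem_Icc [SeminormedAddCommGroup E] {x : ι → E}
    (hx : Tendsto x cofinite (𝓝 0)) (hb : ¬ Bornology.IsBounded (tailSums x ∅)) {r : ℝ}
    (hr : 0 < r) (s : Finset ι) : ∃ u ∈ tailSums x s, ‖u‖ ∈ Set.Icc r (2 * r) := by
  classical
  have hfin : {n | ¬‖x n‖ < r}.Finite := hx.norm.eventually_lt_const (by rwa [norm_zero])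
  set t := s ∪ hfin.toFinset
  obtain ⟨G, hG⟩ : ∃ G : Finset ι, r + ∑ n ∈ t, ‖x n‖ < ‖∑ n ∈ G, x n‖ := by
    by_contra! h
    exact hb (isBounded_iff_forall_norm_le.2 ⟨_, Set.forall_mem_image.2 fun G _ => h G⟩)
  have hsmall : ∀ n ∈ G \ t, ‖x n‖ ≤ r := fun n hn => by
    by_contra hxn
    exact (Finset.mem_sdiff.1 hn).2 (Finset.mem_union_right _
      (hfin.mem_toFinset.2 fun h => hxn h.le))
  have hlarge : r ≤ ‖∑ n ∈ G \ t, x n‖ := by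
    have hsplit := Finset.sum_inter_add_sum_sdiff G t x
    have hinter : ‖∑ n ∈ G ∩ t, x n‖ ≤ ∑ n ∈ t, ‖x n‖ :=
      (norm_sum_le _ _).trans (Finset.sum_le_sum_of_subset_of_nonneg Finset.inter_subset_right
        fun _ _ _ => norm_nonneg _)
    linarith [hsplit ▸ norm_add_le (∑ n ∈ G ∩ t, x n) (∑ n ∈ G \ t, x n)]
  obtain ⟨H, hHG, hH⟩ := exists_subset_norm_sum_mem_Icc hr.le hsmall hlarge
  exact ⟨_, ⟨H, Finset.sdiff_disjoint.mono hHG Finset.subset_union_left, rfl⟩, hH⟩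

theorem accPt_zero_tailLimits [NormedAddCommGroup E] [ProperSpace E] {x : ι → E}
    (hx : Tendsto x cofinite (𝓝 0)) (hb : ¬ Bornology.IsBounded (tailSums x ∅)) :
    AccPt 0 (𝓟 (tailLimits x)) := by
  classical
  refine accPt_iff_nhds.2 fun U hU => ?_
  obtain ⟨r, hr, hrU⟩ := Metric.nhds_basis_closedBall.mem_iff.1 hU
  set K : Set E := {u | ‖u‖ ∈ Set.Icc (r / 2) (2 * (r / 2))}
  have hK : IsCompact K :=
    Metric.isCompact_of_isClosed_isBounded (isClosed_Icc.preimage continuous_norm)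
      (isBounded_iff_forall_norm_le.2 ⟨_, fun u hu => hu.2⟩)
  obtain ⟨u, ⟨hru, hur⟩, hu⟩ := hK.inter_iInter_nonempty (fun s => closure (tailSums x s))
    (fun _ => isClosed_closure) fun T => by
      obtain ⟨u, hu, huK⟩ := exists_mem_tailSums_norm_mem_Icc hx hb (half_pos hr) (T.sup id)
      exact ⟨u, huK, Set.mem_iInter₂.2 fun s hs =>
        subset_closure (tailSums_anti (Finset.le_sup (f := id) hs) hu)⟩
  refine ⟨u, ⟨hrU (mem_closedBall_zero_iff.2 (by linarith)), hu⟩, norm_pos_iff.1 ?_⟩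
  linarith

theorem tendsto_cofinite_zero_of_tendsto_sum_range [AddCommGroup E] [TopologicalSpace E]
    [IsTopologicalAddGroup E] {x : ℕ → E}
    (hx : ∃ a, Tendsto (fun N => ∑ n ∈ Finset.range N, x n) atTop (𝓝 a)) :
    Tendsto x cofinite (𝓝 0) := by
  obtain ⟨a, ha⟩ := hx
  rw [Nat.cofinite_eq_atTop]
  simpa [Finset.sum_range_succ] using ((tendsto_add_atTop_iff_nat 1).2 ha).sub ha

end Unbounded

section FiniteDimensional

variable {E : Type*} [NormedAddCommGroup E] [NormedSpace ℝ E] [FiniteDimensional ℝ E] {x : ℕ → E}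

theorem exists_ne_zero_mem_linealitySpace_tailLimits [Nontrivial E]
    (hx : ∃ a, Tendsto (fun N => ∑ n ∈ Finset.range N, x n) atTop (𝓝 a))
    (hd : Dense (tailSums x ∅)) : ∃ w ∈ linealitySpace (tailLimitsSubgroup x hx), w ≠ 0 := by
  have : ProperSpace E := FiniteDimensional.proper ℝ E
  have hb : ¬ Bornology.IsBounded (tailSums x ∅) := by
    rw [← Metric.isBounded_closure_iff, hd.closure_eq]
    exact NormedSpace.unbounded_univ ℝ E
  obtain ⟨w, hw, hw0⟩ := tangentConeAt_nonempty_of_properSpace (𝕜 := ℝ)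
    (accPt_zero_tailLimits (tendsto_cofinite_zero_of_tendsto_sum_range hx) hb)
  exact ⟨w, tangentConeAt_zero_subset_linealitySpace (tailLimitsSubgroup x hx)
    isClosed_tailLimits hw, hw0⟩

theorem tailLimits_eq_univ
    (hx : ∃ a, Tendsto (fun N => ∑ n ∈ Finset.range N, x n) atTop (𝓝 a))
    (hd : Dense (tailSums x ∅)) : tailLimits x = Set.univ := by
  set V := linealitySpace (tailLimitsSubgroup x hx)
  have hVx : (V : Set E) ⊆ tailLimits x := linealitySpace_subset _
  suffices V = ⊤ from Set.univ_subset_iff.1 (by simpa [this] using hVx)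
  by_contra hV
  have : Nontrivial (E ⧸ V) := Submodule.Quotient.nontrivial_iff.2 hV
  have : IsClosed (V : Set E) := V.closed_of_finiteDimensional
  set q : E →+ E ⧸ V := V.mkQ.toAddMonoidHom
  have hq : IsQuotientMap q := V.isQuotientMap_mkQL
  have hqx : ∃ a, Tendsto (fun N => ∑ n ∈ Finset.range N, q (x n)) atTop (𝓝 a) := by
    obtain ⟨a, ha⟩ := hx
    exact ⟨q a, by simpa only [Function.comp_def, map_sum] using (hq.continuous.tendsto a).comp ha⟩
  have hqd : Dense (tailSums (q ∘ x) ∅) :=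
    image_tailSums q x ∅ ▸ hq.surjective.denseRange.dense_image hq.continuous hd
  obtain ⟨w, hw, hw0⟩ := exists_ne_zero_mem_linealitySpace_tailLimits hqx hqd
  obtain ⟨v, rfl⟩ := hq.surjective w
  have hker : (q.ker : Set E) ⊆ tailLimits x :=
    fun _ hu => hVx ((Submodule.Quotient.mk_eq_zero V).1 hu)
  have hv : v ∈ V := fun t => mem_tailLimits_of_map_mem hq hker (hw t)
  exact hw0 ((Submodule.Quotient.mk_eq_zero V).2 hv)

end FiniteDimensional

section Summable

variable {F : Type*} [AddCommGroup F] [UniformSpace F] [IsUniformAddGroup F]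
  [CompleteSpace F] {y : ℕ → F}

theorem summable_ite_bool (hy : Summable y) (ε : ℕ → Bool) :
    Summable fun n => if ε n then y n else 0 :=
  hy.summable_of_eq_zero_or_self fun _ => (ite_eq_or_eq ..).symm

variable [T2Space F]

theorem achv_eq_range_tsum (hy : Summable y) :
    achv y = Set.range fun ε : ℕ → Bool => ∑' n, if ε n then y n else 0 := by
  ext a
  refine exists_congr fun ε => ⟨fun h => ?_, ?_⟩
  · exact tendsto_nhds_unique (summable_ite_bool hy ε).hasSum.tendsto_sum_nat h
  · rintro rfl
    exact (summable_ite_bool hy ε).hasSum.tendsto_sum_nat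

theorem continuous_tsum_ite_bool (hy : Summable y) :
    Continuous fun ε : ℕ → Bool => ∑' n, if ε n then y n else 0 := by
  have hunif : TendstoUniformly (fun (G : Finset ℕ) (ε : ℕ → Bool) =>
      ∑ n ∈ G, if ε n then y n else 0) (fun ε => ∑' n, if ε n then y n else 0) atTop := by
    intro U hU
    rw [uniformity_eq_comap_nhds_zero_swapped] at hU
    obtain ⟨W, hW, hWU⟩ := hU
    obtain ⟨s, hs⟩ := hy.tsum_vanishing hW
    filter_upwards [eventually_ge_atTop s] with G hG ε
    have htail : ∑' n : ((G : Set ℕ)ᶜ : Set ℕ), (if ε n then y n else 0) =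
        ∑' n : ({n | ε n} \ (G : Set ℕ) : Set ℕ), y n := by
      rw [tsum_subtype (_ᶜ) fun n => if ε n then y n else 0, tsum_subtype]
      refine tsum_congr fun n => ?_
      by_cases hn : n ∈ G <;> simp [Set.indicator_apply, hn]
    refine hWU ?_
    rw [Set.mem_preimage, ← (summable_ite_bool hy ε).sum_add_tsum_compl (s := G), htail,
      add_sub_cancel_left]
    exact hs _ (Set.disjoint_sdiff_left.mono_right (Finset.coe_subset.2 hG))
  refine hunif.continuous (Frequently.of_forall fun G => continuous_finsetSum G fun n _ => ?_)
  exact (continuous_of_discreteTopology (f := fun b : Bool => if b then y n else 0)).comp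
    (continuous_apply n)

theorem isClosed_achv (hy : Summable y) : IsClosed (achv y) := by
  rw [achv_eq_range_tsum hy]
  exact (isCompact_range (continuous_tsum_ite_bool hy)).isClosed

end Summable

theorem mem_closure_achv_prodMk {E F : Type*} [AddCommGroup E] [TopologicalSpace E]
    [ContinuousAdd E] [AddCommGroup F] [TopologicalSpace F] [IsTopologicalAddGroup F]
    {x : ℕ → E} {y : ℕ → F} (hx : tailLimits x = Set.univ) (hy : Summable y) (a : E) {b : F}
    (hb : b ∈ achv y) : (a, b) ∈ closure (achv fun n => (x n, y n)) := by
  rw [closure_achv, ← closure_closure]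
  refine map_mem_closure (Continuous.prodMk_right a) (closure_achv y ▸ subset_closure hb) ?_
  rintro _ ⟨G, hG, rfl⟩
  have hsum : (∑ n ∈ G, x n, ∑ n ∈ G, y n) ∈ closure (tailSums (fun n => (x n, y n)) ∅) :=
    subset_closure ⟨G, hG, by ext <;> simp only [Prod.fst_sum, Prod.snd_sum]⟩
  have hshift : (a - ∑ n ∈ G, x n, (0 : F)) ∈ tailLimits fun n => (x n, y n) :=
    prodMk_zero_mem_tailLimits hy (hx ▸ Set.mem_univ _)
  simpa using add_mem_closure_tailSums hsum hshift

theorem stmt_15_general {E F : Type*} [NormedAddCommGroup E] [NormedSpace ℝ E]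
    [FiniteDimensional ℝ E] [AddCommGroup F] [UniformSpace F] [IsUniformAddGroup F]
    [CompleteSpace F] [T2Space F] {x : ℕ → E} {y : ℕ → F}
    (hx : ∃ a, Tendsto (fun N => ∑ n ∈ Finset.range N, x n) atTop (𝓝 a))
    (hd : Dense (achv x)) (hy : Summable y) :
    closure (achv fun n => (x n, y n)) = Set.univ ×ˢ achv y := by
  have hd' : Dense (tailSums x ∅) :=
    dense_iff_closure_eq.2 (closure_achv x ▸ hd.closure_eq)
  refine Set.Subset.antisymm (closure_minimal ?_ (isClosed_univ.prod (isClosed_achv hy))) ?_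
  · intro _ hu
    exact ⟨trivial, map_mem_achv (f := AddMonoidHom.snd E F) (z := fun n => (x n, y n))
      continuous_snd hu⟩
  · exact fun ⟨a, _⟩ ⟨_, hb⟩ => mem_closure_achv_prodMk (tailLimits_eq_univ hx hd') hy a hb

/-- If `∑ x_n` is conditionally convergent in `ℝ^k` with `A(x)` dense in `ℝ^k`
and `∑ y_n` is absolutely convergent in `ℝ^m`, then the closure of the achievement set of the
sequence of pairs `(x_n, y_n)` equals `ℝ^k × A(y)`. -/
theorem stmt_15 (k m : ℕ) (x : ℕ → EuclideanSpace ℝ (Fin k))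
    (y : ℕ → EuclideanSpace ℝ (Fin m))
    (hconv : ∃ s, Tendsto (fun N => ∑ n ∈ Finset.range N, x n) atTop (𝓝 s))
    (hnabs : ¬ Summable fun n => ‖x n‖)
    (hd : Dense (achv x))
    (hy : Summable fun n => ‖y n‖) :
    closure (achv (fun n => (x n, y n))) = Set.univ ×ˢ achv y :=
  stmt_15_general hconv hd hy.of_norm
end
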